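/- Let Φ = {f_1,…,f_N} be an iterated function system of contracting similarities on ℝ^d with ratios λ_1,…,λ_N satisfying the open set condition, let p be a probability vector with all p_i > 0, and let α > 0 satisfy α ≤ −Σ_{i=1}^N λ_i^{s(α)} p_i e^α log p_i, where s(α) is the unique real number with Σ_{i=1}^N λ_i^{s(α)} p_i e^α = 1 (that is, s(α) = P_α(1)). Let ℓ : ℕ → ℕ be monotone increasing with liminf_{n→∞} ℓ(n)/log n = 1/α. Then for ℙ_p-almost every ō ∈ Σ, dim_H R(ō,ℓ) ≥ s(α). -/

import Mathlib

/-!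
Fix `0 < t < s(α)`. The weights `q i = lam i ^ s(α) * p i * exp α` form a probability vector, and
the condition on `α` says that the mean of `log (p i) + α` under `q` is nonpositive. By the
exponential Markov inequality and the pigeonhole principle over types there is therefore a family
of `M` words of a common length `b`, all with the same contraction ratio `ρ` and the same
probability `P`, with `M * ρ ^ t > 1` and `M * ρ ^ t * P ≥ exp ((κ - α) * b)` for some `κ > 0`
(`exists_block`).

For infinitely many `n` the target length `ℓ n` is at most `b * j`, where `j` is such that `n` is
about `exp (a * b * j)` with `a < α` close to `α`. Among the first `n / (b * j)` disjoint blocks of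
length `b * j` of `o`, those which are concatenations of `j` words of the family are counted
according to their first `i ≤ j` constituents. These counts are binomial, so Chernoff bounds
(`blockCount_tails`) make all of them comparable to their means up to an error `j ^ 2`, outside an
event of probability tending to `0` (`measure_bad_le`). Since `M * ρ ^ t * P` exceeds
`exp (-α * b)`, there are enough blocks for the empirical measure to be as well spread as required
(`ae_exists_empirical`).

For almost every `o` this happens arbitrarily far along `o`. Redistributing mass successively along
the empirical measures and passing to a weak limit gives a probability measure carried by the limsup
set whose mass on a cylinder of generation `i` is at most `5 * (ρ ^ t) ^ i` (`exists_frostman`). By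
the open set condition a set of diameter `ρ ^ i` meets boundedly many pieces of generation `i`, so
the mass distribution principle gives dimension at least `t` (`le_dimH_of_frostman`).
-/

open MeasureTheory Filter Topology Set ENNReal

noncomputable section

/-- The cylinder set in `{1,…,N}^ℕ` determined by a finite word `w` of length `m`. -/
def cylinder {N m : ℕ} (w : Fin m → Fin N) : Set (ℕ → Fin N) :=
  {x | ∀ j : Fin m, x (j : ℕ) = w j}

/-- The product `r_{w 0} ⋯ r_{w (m-1)}` of weights along a finite word `w`. -/
def wordProd {N : ℕ} (r : Fin N → ℝ) {m : ℕ} (w : Fin m → Fin N) : ℝ :=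
  ∏ j, r (w j)

/-- The composition `f_{x 0} ∘ f_{x 1} ∘ ⋯ ∘ f_{x (n-1)}` of the maps along
the first `n` symbols of `x`; the coding map is `π x = lim_n prefixMap f x n 0`. -/
def prefixMap {N : ℕ} {E : Type*} (f : Fin N → E → E) (x : ℕ → Fin N) : ℕ → E → E
  | 0 => id
  | n + 1 => fun y => f (x 0) (prefixMap f (fun k => x (k + 1)) n y)

/-- The symbolic limsup set `⋂ₖ ⋃_{n ≥ k} [(σⁿ ō)|_{ℓ(n)}]`; its image under the
coding map `π` is the dynamical covering set `R(ō, ℓ)`. -/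
def limsupCylinders {N : ℕ} (ℓ : ℕ → ℕ) (o : ℕ → Fin N) : Set (ℕ → Fin N) :=
  ⋂ k, ⋃ n, ⋃ _ : k ≤ n, cylinder (fun j : Fin (ℓ n) => o (n + (j : ℕ)))

/-- `m(n) = ⌊#{k ∈ ℕ : ℓ(k) = n}/n⌋`. -/
def countM (ℓ : ℕ → ℕ) (n : ℕ) : ℕ := Nat.card {k : ℕ | ℓ k = n} / n

/-- The probabilistic pressure
`L(s) = limsup_n (1/n) log Σ_{|ȷ|=n} λ_ȷ^s (1 − (1 − p_ȷ)^{m(n)})`. -/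
def pressL {N : ℕ} (lam p : Fin N → ℝ) (m : ℕ → ℕ) (s : ℝ) : ℝ :=
  Filter.limsup (fun n : ℕ => Real.log (∑ w : Fin n → Fin N,
    wordProd lam w ^ s * (1 - (1 - wordProd p w) ^ m n)) / (n : ℝ)) atTop

/-! ### Independence of blocks and Chernoff bounds -/

/-- The one-symbol law with weights `p`. -/
def symbolLaw {N : ℕ} (p : Fin N → ℝ) : Measure (Fin N) :=
  ∑ i, ENNReal.ofReal (p i) • Measure.dirac i

lemma symbolLaw_apply {N : ℕ} (p : Fin N → ℝ) (A : Finset (Fin N)) :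
    symbolLaw p (A : Set (Fin N)) = ∑ i ∈ A, ENNReal.ofReal (p i) := by
  classical
  simp [symbolLaw, Measure.finsetSum_apply, Set.indicator_apply, Finset.sum_ite_mem]

lemma isProbabilityMeasure_symbolLaw {N : ℕ} (p : Fin N → ℝ) (hp : ∀ i, 0 < p i)
    (hpsum : ∑ i, p i = 1) : IsProbabilityMeasure (symbolLaw p) := by
  constructor
  have := symbolLaw_apply p Finset.univ
  rw [Finset.coe_univ] at this
  rw [this, ← ENNReal.ofReal_sum_of_nonneg (fun i _ => (hp i).le), hpsum, ENNReal.ofReal_one]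

/-- A measure with the Bernoulli cylinder weights is the infinite product measure. -/
lemma eq_infinitePi_of_cylinder {N : ℕ} (p : Fin N → ℝ) (hp : ∀ i, 0 < p i)
    [IsProbabilityMeasure (symbolLaw p)]
    (μ : Measure (ℕ → Fin N))
    (hμ : ∀ (m : ℕ) (w : Fin m → Fin N), μ (_root_.cylinder w) = ENNReal.ofReal (wordProd p w)) :
    μ = Measure.infinitePi (fun _ : ℕ => symbolLaw p) := by
  classical
  refine Measure.eq_infinitePi _ fun s t _ => ?_
  obtain ⟨n, hn⟩ : ∃ n, ∀ i ∈ s, i < n := ⟨s.sup id + 1, fun i hi =>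
    Nat.lt_succ_of_le (Finset.le_sup (f := id) hi)⟩
  -- the constraints at the coordinates outside `s` are void
  set T : Fin n → Finset (Fin N) := fun j =>
    Finset.univ.filter fun a => ((j : ℕ) ∈ s → a ∈ t j) with hT
  have hset : Set.pi (s : Set ℕ) t = ⋃ w ∈ Fintype.piFinset T, _root_.cylinder w := by
    ext x
    simp only [Set.mem_pi, Finset.mem_coe, Set.mem_iUnion, Fintype.mem_piFinset, hT,
      Finset.mem_filter, Finset.mem_univ, true_and, _root_.cylinder, Set.mem_ofPred_eq, exists_prop]
    constructor
    · intro h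
      exact ⟨fun j => x j, fun j hj => h j hj, fun j => rfl⟩
    · rintro ⟨w, hw, hx⟩ i hi
      have := hw ⟨i, hn i hi⟩ hi
      rwa [← hx] at this
  have hmeas : ∀ w : Fin n → Fin N, MeasurableSet (_root_.cylinder w) := by
    intro w
    have : _root_.cylinder w = ⋂ j : Fin n, (fun x : ℕ → Fin N => x (j : ℕ)) ⁻¹' {w j} := by
      ext x; simp [_root_.cylinder]
    rw [this]
    exact MeasurableSet.iInter fun j => measurable_pi_apply _ (measurableSet_singleton _)
  rw [hset, measure_biUnion_finset]
  · simp_rw [hμ, wordProd]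
    have h1 : ∀ w : Fin n → Fin N, ENNReal.ofReal (∏ j, p (w j)) =
        ∏ j, ENNReal.ofReal (p (w j)) := fun w =>
      ENNReal.ofReal_prod_of_nonneg fun j _ => (hp _).le
    simp_rw [h1]
    rw [← Finset.prod_univ_sum T (fun _ a => ENNReal.ofReal (p a))]
    have h2 : ∀ j : Fin n, ∑ a ∈ T j, ENNReal.ofReal (p a) =
        if (j : ℕ) ∈ s then symbolLaw p (t j) else 1 := by
      intro j
      rw [← symbolLaw_apply]
      split_ifs with hj
      · congr 1; ext a; simp [hT, hj]
      · have : ((T j : Finset (Fin N)) : Set (Fin N)) = Set.univ := by ext a; simp [hT, hj]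
        rw [this, measure_univ]
    simp_rw [h2]
    rw [Fin.prod_univ_eq_prod_range (fun j => if j ∈ s then symbolLaw p (t j) else 1) n,
      Finset.prod_ite_mem]
    congr 1
    ext i
    simp only [Finset.mem_inter, Finset.mem_range]
    exact ⟨fun h => h.2, fun h => ⟨hn i h, h⟩⟩
  · intro w _ w' _ hne
    refine Set.disjoint_left.2 fun x hx hx' => hne ?_
    funext j
    rw [← hx j, ← hx' j]
  · intro w _
    exact hmeas w

/-- Consecutive disjoint blocks of length `D` read off a Bernoulli sequence are independent,
with the product law. -/
lemma block_indep {N D : ℕ} [NeZero D] (p : Fin N → ℝ) (hp : ∀ i, 0 < p i) (hpsum : ∑ i, p i = 1)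
    (μ : Measure (ℕ → Fin N)) [IsProbabilityMeasure μ]
    (hμ : ∀ (m : ℕ) (w : Fin m → Fin N), μ (_root_.cylinder w) = ENNReal.ofReal (wordProd p w)) :
    ProbabilityTheory.iIndepFun
      (fun (r : ℕ) (o : ℕ → Fin N) => fun c : Fin D => o (r * D + c)) μ ∧
    ∀ (r : ℕ) (w : Fin D → Fin N),
      μ {o | (fun c : Fin D => o (r * D + c)) = w} = ENNReal.ofReal (wordProd p w) := by
  have := isProbabilityMeasure_symbolLaw p hp hpsum
  have hμe := eq_infinitePi_of_cylinder p hp μ hμ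
  have hm : ∀ r : ℕ, Measurable
      (fun o : ℕ → Fin N => fun c : Fin D => o (r * D + c)) := fun r => by fun_prop
  have hm' : Measurable
      (fun (o : ℕ → Fin N) (r : ℕ) (c : Fin D) => o (r * D + c)) := by fun_prop
  have key : μ.map (fun (o : ℕ → Fin N) (r : ℕ) (c : Fin D) => o (r * D + c)) =
      Measure.infinitePi fun _ : ℕ => Measure.infinitePi fun _ : Fin D => symbolLaw p := by
    rw [← Measure.infinitePi_map_curry (fun (_ : ℕ) (_ : Fin D) => symbolLaw p),
      ← Measure.infinitePi_map_piCongrLeft (fun _ : ℕ × Fin D => symbolLaw p)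
        (Nat.divModEquiv D), ← hμe, Measure.map_map (by fun_prop) (by fun_prop)]
    congr 1
    ext o r c
    simp [MeasurableEquiv.curry, Function.comp, MeasurableEquiv.piCongrLeft,
      Equiv.piCongrLeft, Nat.divModEquiv]
  have hmarg : ∀ r : ℕ, μ.map (fun o : ℕ → Fin N => fun c : Fin D => o (r * D + c)) =
      Measure.infinitePi fun _ : Fin D => symbolLaw p := by
    intro r
    rw [← Measure.infinitePi_map_eval
      (fun _ : ℕ => Measure.infinitePi fun _ : Fin D => symbolLaw p) r, ← key,
      Measure.map_map (by fun_prop) (by fun_prop)]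
    rfl
  refine ⟨?_, fun r w => ?_⟩
  · rw [ProbabilityTheory.iIndepFun_iff_map_fun_eq_infinitePi_map hm, key]
    simp_rw [hmarg]
  · have h1 : μ {o | (fun c : Fin D => o (r * D + c)) = w} =
        μ.map (fun o : ℕ → Fin N => fun c : Fin D => o (r * D + c)) {w} := by
      rw [Measure.map_apply (hm r) (measurableSet_singleton _)]; rfl
    rw [h1, hmarg, Measure.infinitePi_eq_pi, ← Set.univ_pi_singleton w, Measure.pi_pi,
      wordProd, ENNReal.ofReal_prod_of_nonneg fun j _ => (hp _).le]
    refine Finset.prod_congr rfl fun j _ => ?_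
    have := symbolLaw_apply p {w j}
    simpa using this

/-- The number of indices `r ∈ R` for which the `r`-th block of length `D` of `o` lies in `B`. -/
def blockCount {N D : ℕ} (R : Finset ℕ) (B : Finset (Fin D → Fin N)) (o : ℕ → Fin N) : ℝ :=
  ∑ r ∈ R, if (fun c : Fin D => o (r * D + c)) ∈ B then 1 else 0

/-- Both one-sided Chernoff bounds for the binomial variable `blockCount R B`, of mean
`#R * ∑ w ∈ B, wordProd p w`. -/
lemma blockCount_tails {N D : ℕ} [NeZero D] (p : Fin N → ℝ) (hp : ∀ i, 0 < p i)
    (hpsum : ∑ i, p i = 1) (μ : Measure (ℕ → Fin N)) [IsProbabilityMeasure μ]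
    (hμ : ∀ (m : ℕ) (w : Fin m → Fin N), μ (_root_.cylinder w) = ENNReal.ofReal (wordProd p w))
    (R : Finset ℕ) (B : Finset (Fin D → Fin N)) (β : ℝ) (hβ : β = ∑ w ∈ B, wordProd p w) (z : ℝ) :
    μ.real {o | 2 * (R.card * β) + z ≤ blockCount R B o} ≤ Real.exp (-z) ∧
    μ.real {o | blockCount R B o ≤ R.card * β / 2} ≤ Real.exp (-(R.card * β / 8)) := by
  obtain ⟨hind, hlaw⟩ := block_indep (D := D) p hp hpsum μ hμ
  have hw0 : ∀ w : Fin D → Fin N, 0 ≤ wordProd p w := fun w =>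
    Finset.prod_nonneg fun _ _ => (hp _).le
  have hβ0 : 0 ≤ β := hβ ▸ Finset.sum_nonneg fun w _ => hw0 w
  set φ : (Fin D → Fin N) → ℝ := fun w => if w ∈ B then 1 else 0 with hφ
  set X : ℕ → (ℕ → Fin N) → ℝ := fun r o => φ (fun c : Fin D => o (r * D + c)) with hX
  have hφm : Measurable φ := measurable_of_countable _
  have hXm : ∀ r, Measurable (X r) := fun r => hφm.comp (by fun_prop)
  have hXind : ProbabilityTheory.iIndepFun X μ := hind.comp (fun _ => φ) (fun _ => hφm)
  have hsum : (∑ r ∈ R, X r) = blockCount R B := by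
    ext o; simp [blockCount, hX, hφ]
  -- the event that block `r` falls in `B` has probability `β`
  have hprob : ∀ r, μ.real {o | (fun c : Fin D => o (r * D + c)) ∈ B} = β := by
    intro r
    have hset : {o : ℕ → Fin N | (fun c : Fin D => o (r * D + c)) ∈ B} =
        ⋃ w ∈ B, {o | (fun c : Fin D => o (r * D + c)) = w} := by
      ext o; simp
    have hmeas : ∀ w : Fin D → Fin N,
        MeasurableSet {o : ℕ → Fin N | (fun c : Fin D => o (r * D + c)) = w} := fun w =>
      (by fun_prop : Measurable fun (o : ℕ → Fin N) (c : Fin D) => o (r * D + c))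
        (measurableSet_singleton w)
    rw [hset, measureReal_def, measure_biUnion_finset]
    · simp_rw [hlaw]
      rw [← ENNReal.ofReal_sum_of_nonneg fun w _ => hw0 w, ← hβ, ENNReal.toReal_ofReal hβ0]
    · intro w _ w' _ hne
      refine Set.disjoint_left.2 fun o ho ho' => hne ?_
      rw [← (show _ = w from ho), ← (show _ = w' from ho')]
    · exact fun w _ => hmeas w
  have hmgf : ∀ (t : ℝ) (r : ℕ), ProbabilityTheory.mgf (X r) μ t = 1 + β * (Real.exp t - 1) := by
    intro t r
    have hmeas : MeasurableSet {o : ℕ → Fin N | (fun c : Fin D => o (r * D + c)) ∈ B} :=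
      (by fun_prop : Measurable fun (o : ℕ → Fin N) (c : Fin D) => o (r * D + c))
        (Finset.measurableSet B)
    have h1 : ∀ o, Real.exp (t * X r o) = 1 + ({o : ℕ → Fin N |
        (fun c : Fin D => o (r * D + c)) ∈ B}).indicator (fun _ => Real.exp t - 1) o := by
      intro o
      by_cases h : (fun c : Fin D => o (r * D + c)) ∈ B
      · simp [hX, hφ, h]
      · simp [hX, hφ, h]
    rw [ProbabilityTheory.mgf]
    simp_rw [h1]
    rw [integral_add (integrable_const _) ((integrable_const _).indicator hmeas),
      integral_indicator_const _ hmeas, hprob]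
    simp
  have hmgfS : ∀ t : ℝ, ProbabilityTheory.mgf (blockCount R B) μ t ≤
      Real.exp (R.card * β * (Real.exp t - 1)) := by
    intro t
    rw [← hsum, hXind.mgf_sum hXm, Finset.prod_congr rfl fun r _ => hmgf t r,
      Finset.prod_const]
    calc (1 + β * (Real.exp t - 1)) ^ R.card ≤ (Real.exp (β * (Real.exp t - 1))) ^ R.card := by
          refine pow_le_pow_left₀ ?_ ?_ _
          · rw [← hmgf t 0]; exact ProbabilityTheory.mgf_nonneg
          · linarith [Real.add_one_le_exp (β * (Real.exp t - 1))]
      _ = _ := by rw [← Real.exp_nat_mul]; ring_nf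
  have hexpInt : ∀ t : ℝ, Integrable (fun o => Real.exp (t * blockCount R B o)) μ := by
    intro t
    have hSm : Measurable (blockCount R B) := by
      rw [← hsum]
      convert Finset.measurable_sum R fun r _ => hXm r using 1
      ext o; simp
    refine Integrable.of_bound (C := Real.exp (|t| * R.card)) (by fun_prop) ?_
    refine Eventually.of_forall fun o => ?_
    rw [Real.norm_eq_abs, Real.abs_exp]
    refine Real.exp_le_exp.2 ?_
    have hb0 : 0 ≤ blockCount R B o := Finset.sum_nonneg fun r _ => by split_ifs <;> norm_num
    have hb1 : blockCount R B o ≤ R.card := by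
      refine (Finset.sum_le_card_nsmul R _ 1 fun r _ => by split_ifs <;> norm_num).trans ?_
      simp
    calc t * blockCount R B o ≤ |t| * blockCount R B o :=
          mul_le_mul_of_nonneg_right (le_abs_self t) hb0
      _ ≤ _ := mul_le_mul_of_nonneg_left hb1 (abs_nonneg t)
  have hKβ : 0 ≤ (R.card : ℝ) * β := by positivity
  constructor
  · refine (ProbabilityTheory.measure_ge_le_exp_mul_mgf _ zero_le_one (hexpInt 1)).trans ?_
    refine (mul_le_mul_of_nonneg_left (hmgfS 1) (Real.exp_pos _).le).trans ?_
    rw [← Real.exp_add]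
    refine Real.exp_le_exp.2 ?_
    have := Real.exp_one_lt_d9
    nlinarith
  · refine (ProbabilityTheory.measure_le_le_exp_mul_mgf _ (by norm_num : (-1 : ℝ) ≤ 0)
      (hexpInt (-1))).trans ?_
    refine (mul_le_mul_of_nonneg_left (hmgfS (-1)) (Real.exp_pos _).le).trans ?_
    rw [← Real.exp_add]
    refine Real.exp_le_exp.2 ?_
    have h1 := Real.exp_one_gt_d9
    have h2 : Real.exp (-1) ≤ 3 / 8 := by
      rw [Real.exp_neg, inv_le_comm₀ (Real.exp_pos _) (by norm_num)]
      linarith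
    nlinarith

/-! ### A rich family of words of one type -/

lemma sum_wordProd {N b : ℕ} (q : Fin N → ℝ) :
    ∑ w : Fin b → Fin N, wordProd q w = (∑ i, q i) ^ b := by
  classical
  have := Finset.prod_univ_sum (fun _ : Fin b => (Finset.univ : Finset (Fin N)))
    (fun _ a => q a)
  simp only [Finset.prod_const, Finset.card_univ, Fintype.card_fin,
    Fintype.piFinset_univ] at this
  exact this.symm

/-- The occurrence counts of the letters in a word. -/
def wordType {N b : ℕ} (w : Fin b → Fin N) (i : Fin N) : Fin (b + 1) :=
  ⟨(Finset.univ.filter fun j => w j = i).card, Nat.lt_succ_of_le <|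
    (Finset.card_le_univ _).trans (by simp)⟩

lemma wordProd_eq_wordType {N b : ℕ} (r : Fin N → ℝ) (w : Fin b → Fin N) :
    wordProd r w = ∏ i, r i ^ (wordType w i : ℕ) := by
  classical
  rw [wordProd, ← Finset.prod_fiberwise_of_maps_to (s := Finset.univ) (t := Finset.univ)
    (g := w) (fun _ _ => Finset.mem_univ _)]
  refine Finset.prod_congr rfl fun i _ => ?_
  rw [Finset.prod_congr rfl (g := fun _ => r i)
    (fun j hj => by rw [(Finset.mem_filter.1 hj).2]), Finset.prod_const]
  rfl

/-- The Laplace transform of a variable of negative mean drops below `1`, because its derivative at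
`0` is that mean. -/
lemma exists_mgf_lt_one {N : ℕ} (q g : Fin N → ℝ) (hq : ∑ i, q i = 1) (ε : ℝ) (hε : 0 < ε)
    (hg : ∑ i, q i * g i ≤ 0) :
    ∃ θ > 0, ∑ i, q i * Real.exp (θ * (g i - ε)) < 1 := by
  have hd : HasDerivAt (fun θ : ℝ => ∑ i, q i * Real.exp (θ * (g i - ε)))
      (∑ i, q i * (g i - ε)) 0 := by
    refine HasDerivAt.fun_sum fun i _ => ?_
    have h := ((hasDerivAt_id (0 : ℝ)).mul_const (g i - ε)).exp.const_mul (q i)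
    simpa using h
  have hneg : ∑ i, q i * (g i - ε) < 0 := by
    simp_rw [mul_sub]
    rw [Finset.sum_sub_distrib, ← Finset.sum_mul, hq]
    linarith
  have h0 := hd.hasDerivWithinAt.limsup_slope_le' (s := Set.Ioi (0 : ℝ)) (by simp) hneg
  obtain ⟨θ, h1, hθ⟩ := (h0.and self_mem_nhdsWithin).exists
  refine ⟨θ, hθ, ?_⟩
  rw [slope_def_field, div_neg_iff] at h1
  simp only [zero_mul, Real.exp_zero, mul_one, hq, sub_zero] at h1
  have hθ' : 0 < θ := hθ
  rcases h1 with h1 | h1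
  · linarith [h1.2]
  · linarith [h1.1]

/-- A family of words of a common length `b` that all have the same contraction ratio `ρ` and
the same probability `P`, and which is rich enough to carry dimension `t < s(α)`: the type class
is obtained from the law `q i = lam i ^ s * p i * exp α` by the exponential Markov inequality and
the pigeonhole principle over the polynomially many types. -/
lemma exists_block {N : ℕ} [NeZero N]
    (lam p : Fin N → ℝ) (hlam : ∀ i, lam i ∈ Set.Ioo (0 : ℝ) 1) (hp : ∀ i, 0 < p i)
    (α s t : ℝ) (hts : t < s)
    (hs : ∑ i, lam i ^ s * (p i * Real.exp α) = 1)
    (hαcond : α ≤ -∑ i, lam i ^ s * (p i * Real.exp α) * Real.log (p i)) :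
    ∃ (b : ℕ) (G : Finset (Fin b → Fin N)) (ρ P κ t' : ℝ), 0 < b ∧ G.Nonempty ∧
      0 < ρ ∧ ρ < 1 ∧ 0 < P ∧ 0 < κ ∧ t < t' ∧
      (∀ g ∈ G, wordProd lam g = ρ ∧ wordProd p g = P) ∧
      1 ≤ G.card * ρ ^ t' ∧ Real.exp ((κ - α) * b) ≤ G.card * ρ ^ t * P := by
  classical
  obtain ⟨i₀, hi₀⟩ := Finite.exists_max lam
  set L : ℝ := -Real.log (lam i₀) with hL
  have hLpos : 0 < L := by
    have := Real.log_neg (hlam i₀).1 (hlam i₀).2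
    linarith
  set ε : ℝ := (s - t) * L / 8 with hε
  have hεpos : 0 < ε := by have := sub_pos.2 hts; positivity
  set q : Fin N → ℝ := fun i => lam i ^ s * (p i * Real.exp α) with hqdef
  have hqpos : ∀ i, 0 < q i := fun i =>
    mul_pos (Real.rpow_pos_of_pos (hlam i).1 _) (mul_pos (hp i) (Real.exp_pos _))
  set g : Fin N → ℝ := fun i => Real.log (p i) + α with hgdef
  have hg : ∑ i, q i * g i ≤ 0 := by
    simp_rw [hgdef, mul_add]
    rw [Finset.sum_add_distrib, ← Finset.sum_mul, hs]
    linarith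
  obtain ⟨θ, hθ, hr⟩ := exists_mgf_lt_one q g hs ε hεpos hg
  set r : ℝ := ∑ i, q i * Real.exp (θ * (g i - ε)) with hrdef
  have hr0 : 0 ≤ r := Finset.sum_nonneg fun i _ => (mul_pos (hqpos i) (Real.exp_pos _)).le
  -- `b` is large enough to beat the bad words and the number of types
  obtain ⟨b, hb0, hb1, hb2⟩ : ∃ b : ℕ, 0 < b ∧ r ^ b ≤ 1 / 2 ∧
      2 * ((b : ℝ) + 1) ^ N ≤ Real.exp (ε * b) := by
    have h1 : ∀ᶠ b : ℕ in atTop, r ^ b ≤ 1 / 2 :=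
      (tendsto_pow_atTop_nhds_zero_of_lt_one hr0 hr).eventually_le_const (by norm_num)
    have h2 : ∀ᶠ b : ℕ in atTop, 2 * ((b : ℝ) + 1) ^ N ≤ Real.exp (ε * b) := by
      have ht : Tendsto (fun b : ℕ => (b : ℝ) + 1) atTop atTop :=
        tendsto_atTop_add_const_right _ _ tendsto_natCast_atTop_atTop
      have ho := ht.eventually ((isLittleO_pow_exp_pos_mul_atTop (k := N) hεpos).bound
        (by positivity : 0 < Real.exp (-ε) / 2))
      filter_upwards [ho] with b hb
      rw [Real.norm_of_nonneg (by positivity), Real.norm_of_nonneg (by positivity)] at hb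
      calc 2 * ((b : ℝ) + 1) ^ N
          ≤ 2 * (Real.exp (-ε) / 2 * Real.exp (ε * ((b : ℝ) + 1))) := by gcongr
        _ = Real.exp (-ε) * Real.exp (ε * ((b : ℝ) + 1)) := by ring
        _ = Real.exp (ε * b) := by rw [← Real.exp_add]; ring_nf
    obtain ⟨b, h⟩ := ((eventually_gt_atTop 0).and (h1.and h2)).exists
    exact ⟨b, h.1, h.2.1, h.2.2⟩
  have hνpos : ∀ w : Fin b → Fin N, 0 < wordProd q w := fun w =>
    Finset.prod_pos fun _ _ => hqpos _
  have hpw : ∀ w : Fin b → Fin N, 0 < wordProd p w := fun w =>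
    Finset.prod_pos fun _ _ => hp _
  have hlw : ∀ w : Fin b → Fin N, 0 < wordProd lam w := fun w =>
    Finset.prod_pos fun _ _ => (hlam _).1
  set good : Finset (Fin b → Fin N) := Finset.univ.filter fun w =>
    ∑ j, g (w j) ≤ ε * b with hgood
  have hgoodν : 1 / 2 ≤ ∑ w ∈ good, wordProd q w := by
    have h1 : ∑ w ∈ Finset.univ.filter (fun w : Fin b → Fin N => ¬ ∑ j, g (w j) ≤ ε * b),
        wordProd q w ≤ r ^ b := by
      rw [hrdef, ← sum_wordProd]
      refine (Finset.sum_le_sum (g := fun w => wordProd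
        (fun i => q i * Real.exp (θ * (g i - ε))) w) fun w hw => ?_).trans
        (Finset.sum_le_sum_of_subset_of_nonneg (Finset.filter_subset _ _) fun w _ _ =>
          Finset.prod_nonneg fun _ _ => (mul_pos (hqpos _) (Real.exp_pos _)).le)
      change ∏ j, q (w j) ≤ ∏ j, (q (w j) * Real.exp (θ * (g (w j) - ε)))
      rw [Finset.prod_mul_distrib (f := fun j => q (w j)), ← Real.exp_sum, ← Finset.mul_sum,
        Finset.sum_sub_distrib]
      refine le_mul_of_one_le_right (hνpos w).le (Real.one_le_exp ?_)
      have := not_le.1 (Finset.mem_filter.1 hw).2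
      simp only [Finset.sum_const, Finset.card_univ, Fintype.card_fin, nsmul_eq_mul]
      refine mul_nonneg hθ.le ?_
      linarith
    have h2 := Finset.sum_filter_add_sum_filter_not (Finset.univ : Finset (Fin b → Fin N))
      (fun w => ∑ j, g (w j) ≤ ε * b) (wordProd q)
    rw [sum_wordProd, hs, one_pow] at h2
    linarith
  -- pigeonhole over the types
  obtain ⟨τ, hτ⟩ : ∃ τ : Fin N → Fin (b + 1),
      1 / (2 * ((b : ℝ) + 1) ^ N) ≤ ∑ w ∈ good.filter (fun w => wordType w = τ), wordProd q w := by
    by_contra! hcon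
    have h1 := Finset.sum_fiberwise good (wordType (N := N) (b := b)) (wordProd q)
    have h2 : ∑ τ : Fin N → Fin (b + 1), ∑ w ∈ good.filter (fun w => wordType w = τ),
        wordProd q w < ∑ _τ : Fin N → Fin (b + 1), 1 / (2 * ((b : ℝ) + 1) ^ N) :=
      Finset.sum_lt_sum_of_nonempty Finset.univ_nonempty fun τ _ => hcon τ
    rw [h1] at h2
    simp only [Finset.sum_const, Finset.card_univ, Fintype.card_pi, Fintype.card_fin,
      Finset.prod_const, nsmul_eq_mul] at h2
    push_cast at h2
    have hpos : (0 : ℝ) < ((b : ℝ) + 1) ^ N := by positivity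
    rw [show ((b : ℝ) + 1) ^ N * (1 / (2 * ((b : ℝ) + 1) ^ N)) = 1 / 2 by field_simp] at h2
    linarith
  set G := good.filter (fun w => wordType w = τ) with hG
  have hGne : G.Nonempty := by
    rw [Finset.nonempty_iff_ne_empty]
    intro h
    rw [h, Finset.sum_empty] at hτ
    have : (0 : ℝ) < 1 / (2 * ((b : ℝ) + 1) ^ N) := by positivity
    linarith
  obtain ⟨w₀, hw₀⟩ := hGne
  set ρ := wordProd lam w₀ with hρ
  set P := wordProd p w₀ with hP
  have hconst : ∀ (x : Fin N → ℝ), ∀ w ∈ G, wordProd x w = wordProd x w₀ := by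
    intro x w hw
    rw [wordProd_eq_wordType, wordProd_eq_wordType, (Finset.mem_filter.1 hw).2,
      (Finset.mem_filter.1 hw₀).2]
  have hρpos : 0 < ρ := hlw w₀
  have hPpos : 0 < P := hpw w₀
  have hqw : wordProd q w₀ = ρ ^ s * P * Real.exp (α * b) := by
    simp only [wordProd, hqdef, hρ, hP]
    rw [Finset.prod_mul_distrib, Finset.prod_mul_distrib,
      Real.finsetProd_rpow _ _ fun j _ => (hlam _).1.le]
    simp only [Finset.prod_const, Finset.card_univ, Fintype.card_fin]
    rw [← Real.exp_nat_mul]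
    ring_nf
  have hlogρ : Real.log ρ ≤ -(L * b) := by
    rw [hρ, wordProd, Real.log_prod fun j _ => (hlam _).1.ne']
    calc ∑ j : Fin b, Real.log (lam (w₀ j)) ≤ ∑ _j : Fin b, -L :=
          Finset.sum_le_sum fun j _ => by
            rw [hL, neg_neg]; exact Real.log_le_log (hlam _).1 (hi₀ _)
      _ = -(L * b) := by simp; ring
  have hbpos : (0 : ℝ) < b := by exact_mod_cast hb0
  have hlogP : Real.log P + α * b ≤ ε * b := by
    have h1 := (Finset.mem_filter.1 (Finset.mem_filter.1 hw₀).1).2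
    simp only [hgdef, Finset.sum_add_distrib] at h1
    rw [hP, wordProd, Real.log_prod fun j _ => (hp _).ne']
    simpa [mul_comm] using h1
  have hM : (0 : ℝ) < G.card := by
    exact_mod_cast Finset.card_pos.2 ⟨w₀, hw₀⟩
  -- the logarithmic form of `#G * ρ ^ s * P * exp (α b) ≥ exp (-ε b)`
  have hlogM : -(ε * b) ≤ Real.log G.card + s * Real.log ρ + Real.log P + α * b := by
    rw [Finset.sum_congr rfl (fun w hw => hconst q w hw), Finset.sum_const, nsmul_eq_mul,
      hqw] at hτ
    have h1 : Real.exp (-(ε * b)) ≤ G.card * (ρ ^ s * P * Real.exp (α * b)) := by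
      refine le_trans ?_ hτ
      rw [Real.exp_neg, ← one_div]
      exact one_div_le_one_div_of_le (by positivity) hb2
    have h2 := Real.log_le_log (Real.exp_pos _) h1
    rw [Real.log_exp, Real.log_mul hM.ne' (by positivity), Real.log_mul (by positivity)
      (by positivity), Real.log_mul (by positivity) hPpos.ne', Real.log_exp,
      Real.log_rpow hρpos] at h2
    linarith
  refine ⟨b, G, ρ, P, ε, (s + t) / 2, hb0, ⟨w₀, hw₀⟩, hρpos, ?_, hPpos, hεpos, by linarith,
    fun g hg => ⟨hconst lam g hg, hconst p g hg⟩, ?_, ?_⟩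
  · rw [← Real.log_neg_iff hρpos]
    nlinarith [mul_pos hLpos hbpos]
  · rw [← Real.log_nonneg_iff (by positivity), Real.log_mul hM.ne' (by positivity),
      Real.log_rpow hρpos]
    have h3 : 4 * (ε * b) ≤ -((s - t) / 2 * Real.log ρ) := by
      have := mul_le_mul_of_nonneg_left hlogρ (by linarith : 0 ≤ (s - t) / 2)
      rw [hε]; linarith
    linarith [mul_pos hεpos hbpos]
  · rw [← Real.le_log_iff_exp_le (by positivity), Real.log_mul (by positivity) hPpos.ne',
      Real.log_mul hM.ne' (by positivity), Real.log_rpow hρpos]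
    have h3 : 8 * (ε * b) ≤ -((s - t) * Real.log ρ) := by
      have := mul_le_mul_of_nonneg_left hlogρ (by linarith : 0 ≤ (s - t))
      rw [hε]; linarith
    linarith [mul_pos hεpos hbpos]

/-! ### Construction of the Frostman measure -/

/-- `A` is a union of cylinders of depth `L`. -/
def DeterminedBy {M : ℕ} (L : ℕ) (A : Set (ℕ → Fin M)) : Prop :=
  ∀ x ∈ A, PiNat.cylinder x L ⊆ A

lemma DeterminedBy.mono {M L L' : ℕ} {A : Set (ℕ → Fin M)} (h : DeterminedBy L A) (hL : L ≤ L') :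
    DeterminedBy L' A := fun x hx => (PiNat.cylinder_anti x hL).trans (h x hx)

lemma determinedBy_cylinder {M : ℕ} (x : ℕ → Fin M) (L : ℕ) :
    DeterminedBy L (PiNat.cylinder x L) := fun _ hy => by
  rw [PiNat.mem_cylinder_iff_eq.1 hy]

lemma DeterminedBy.compl {M L : ℕ} {A : Set (ℕ → Fin M)} (h : DeterminedBy L A) :
    DeterminedBy L Aᶜ := fun _ hx y hy hyA =>
  hx (h y hyA ((PiNat.mem_cylinder_comm _ _ _).1 hy))

lemma determinedBy_subset {M : ℕ} (L : ℕ) (T : Set (ℕ → Fin M)) :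
    DeterminedBy L {x | PiNat.cylinder x L ⊆ T} := fun _ hx y hy => by
  change PiNat.cylinder y L ⊆ T
  rw [PiNat.mem_cylinder_iff_eq.1 hy]
  exact hx

lemma DeterminedBy.isClopen {M L : ℕ} {A : Set (ℕ → Fin M)} (h : DeterminedBy L A) :
    IsClopen A := by
  have : ∀ {B : Set (ℕ → Fin M)}, DeterminedBy L B → IsOpen B := by
    intro B hB
    have : B = ⋃ x ∈ B, PiNat.cylinder x L := by
      ext y
      simp only [Set.mem_iUnion, exists_prop]
      exact ⟨fun hy => ⟨y, hy, PiNat.self_mem_cylinder _ _⟩, fun ⟨x, hx, hy⟩ => hB x hx hy⟩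
    rw [this]
    exact isOpen_biUnion fun x _ => PiNat.isOpen_cylinder _ x L
  exact ⟨isOpen_compl_iff.1 (this h.compl), this h⟩

lemma measurable_of_determined {M L : ℕ} {β : Type*} [MeasurableSpace β] [NeZero M]
    (F : (ℕ → Fin M) → β) (hF : ∀ x, ∀ y ∈ PiNat.cylinder x L, F y = F x) : Measurable F := by
  have : F = (fun w : Fin L → Fin M => F fun n => if h : n < L then w ⟨n, h⟩ else 0) ∘
      fun x a => x a := by
    funext x
    refine (hF x _ ?_).symm
    rw [PiNat.mem_cylinder_iff]
    intro i hi
    simp [hi]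
  rw [this]
  exact (measurable_of_countable _).comp (by fun_prop)

lemma measure_eq_of_determined {M L : ℕ} [NeZero M] (m m' : Measure (ℕ → Fin M))
    (h : ∀ x, m (PiNat.cylinder x L) = m' (PiNat.cylinder x L)) {A : Set (ℕ → Fin M)}
    (hA : DeterminedBy L A) : m A = m' A := by
  classical
  -- representatives of the cylinders of depth `L`
  set e : (Fin L → Fin M) → (ℕ → Fin M) := fun w n => if h : n < L then w ⟨n, h⟩ else 0 with he
  have hset : A = ⋃ w ∈ Finset.univ.filter (fun w => e w ∈ A), PiNat.cylinder (e w) L := by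
    ext y
    simp only [Set.mem_iUnion, Finset.mem_filter, Finset.mem_univ, true_and, exists_prop]
    constructor
    · intro hy
      have hey : e (fun a => y a) ∈ PiNat.cylinder y L := by
        rw [PiNat.mem_cylinder_iff]; intro i hi; simp [he, hi]
      exact ⟨fun a => y a, hA y hy hey, (PiNat.mem_cylinder_comm _ _ _).1 hey⟩
    · rintro ⟨w, hw, hy⟩
      exact hA _ hw hy
  have hdisj : ((Finset.univ.filter (fun w => e w ∈ A) : Finset (Fin L → Fin M)) :
      Set (Fin L → Fin M)).PairwiseDisjoint (fun w => PiNat.cylinder (e w) L) := by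
    intro w _ w' _ hne
    refine Set.disjoint_left.2 fun y hy hy' => hne ?_
    funext a
    have h1 := PiNat.mem_cylinder_iff.1 hy a a.2
    have h2 := PiNat.mem_cylinder_iff.1 hy' a a.2
    simpa [he] using h1.symm.trans h2
  have hmeas : ∀ w ∈ Finset.univ.filter (fun w => e w ∈ A),
      MeasurableSet (PiNat.cylinder (e w) L) := fun w _ =>
    (PiNat.isOpen_cylinder _ _ _).measurableSet
  rw [hset, measure_biUnion_finset hdisj hmeas, measure_biUnion_finset hdisj hmeas]
  exact Finset.sum_congr rfl fun w _ => h _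

/-- Redistribute the mass that `m` gives to each cylinder of depth `L` proportionally to `θ`. -/
lemma exists_redistribution {M L : ℕ} [NeZero M] (m θ : Measure (ℕ → Fin M))
    [IsProbabilityMeasure m] [IsFiniteMeasure θ] (hθ : ∀ x, θ (PiNat.cylinder x L) ≠ 0) :
    ∃ m' : Measure (ℕ → Fin M), IsProbabilityMeasure m' ∧ m' ≪ θ ∧
      (∀ A, DeterminedBy L A → m' A = m A) ∧
      ∀ x i, L ≤ i → m' (PiNat.cylinder x i) =
        m (PiNat.cylinder x L) / θ (PiNat.cylinder x L) * θ (PiNat.cylinder x i) := by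
  set F : (ℕ → Fin M) → ℝ≥0∞ := fun x => m (PiNat.cylinder x L) / θ (PiNat.cylinder x L) with hF
  have hFc : ∀ x, ∀ y ∈ PiNat.cylinder x L, F y = F x := by
    intro x y hy
    simp only [hF, PiNat.mem_cylinder_iff_eq.1 hy]
  have hFm : Measurable F := measurable_of_determined F hFc
  have hcyl : ∀ x i, L ≤ i → θ.withDensity F (PiNat.cylinder x i) =
      F x * θ (PiNat.cylinder x i) := by
    intro x i hi
    have hm : MeasurableSet (PiNat.cylinder x i) := (PiNat.isOpen_cylinder _ _ _).measurableSet
    rw [withDensity_apply _ hm, setLIntegral_congr_fun hm (g := fun _ => F x)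
      fun y hy => hFc x y (PiNat.cylinder_anti x hi hy), setLIntegral_const]
  have hdet : ∀ A, DeterminedBy L A → θ.withDensity F A = m A := by
    intro A hA
    refine measure_eq_of_determined _ _ (fun x => ?_) hA
    rw [hcyl x L le_rfl]
    exact ENNReal.div_mul_cancel (hθ x) (measure_ne_top _ _)
  refine ⟨θ.withDensity F, ⟨?_⟩, withDensity_absolutelyContinuous _ _, hdet, hcyl⟩
  rw [hdet Set.univ fun _ _ => Set.subset_univ _, measure_univ]

/-- The inductive construction of a Frostman measure on a limsup set of cylinders. At each stage
an auxiliary measure `θ` carried by `T n` redistributes the mass inside the cylinders reached so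
far; the last hypothesis on `θ` prevents the constant `5` from accumulating. -/
lemma exists_frostman {M : ℕ} [NeZero M] (τ : ℝ≥0∞) (T : ℕ → Set (ℕ → Fin M))
    (H : ∀ i₀ n : ℕ, ∃ j > i₀, ∃ θ : Measure (ℕ → Fin M), IsFiniteMeasure θ ∧
      θ {x | PiNat.cylinder x j ⊆ T n}ᶜ = 0 ∧ (∀ x, θ (PiNat.cylinder x i₀) ≠ 0) ∧
      (∀ x i, i₀ ≤ i → i ≤ j →
        θ (PiNat.cylinder x i) ≤ 5 * τ ^ (i - i₀) * θ (PiNat.cylinder x i₀)) ∧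
      ∀ x, θ (PiNat.cylinder x j) ≤ τ ^ j * θ (PiNat.cylinder x i₀)) :
    ∃ m : Measure (ℕ → Fin M), IsProbabilityMeasure m ∧ (∀ n, m (T n)ᶜ = 0) ∧
      ∀ x i, m (PiNat.cylinder x i) ≤ 5 * τ ^ i := by
  let Inv : ℕ × ProbabilityMeasure (ℕ → Fin M) → Prop := fun s =>
    (∀ x, (s.2 : Measure (ℕ → Fin M)) (PiNat.cylinder x s.1) ≤ τ ^ s.1) ∧
    ∀ x, ∀ i ≤ s.1, (s.2 : Measure (ℕ → Fin M)) (PiNat.cylinder x i) ≤ 5 * τ ^ i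
  have step : ∀ (n : ℕ) (s : {s // Inv s}), ∃ s' : {s // Inv s}, s.1.1 < s'.1.1 ∧
      (∀ A, DeterminedBy s.1.1 A → (s'.1.2 : Measure (ℕ → Fin M)) A = (s.1.2 : Measure (ℕ → Fin M)) A) ∧
      (s'.1.2 : Measure (ℕ → Fin M)) {x | PiNat.cylinder x s'.1.1 ⊆ T n}ᶜ = 0 := by
    rintro n ⟨⟨L, m⟩, h1, h2⟩
    dsimp only at h1 h2 ⊢
    obtain ⟨j, hj, θ, hθf, hθT, hθ0, hθi, hθj⟩ := H L n
    obtain ⟨m', hm'p, hac, hdet, hcyl⟩ := exists_redistribution (L := L) (m : Measure (ℕ → Fin M)) θ hθ0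
    have hbound : ∀ x i (c : ℝ≥0∞), L ≤ i →
        θ (PiNat.cylinder x i) ≤ c * θ (PiNat.cylinder x L) →
        m' (PiNat.cylinder x i) ≤ c * (m : Measure (ℕ → Fin M)) (PiNat.cylinder x L) := by
      intro x i c hi hc
      rw [hcyl x i hi]
      refine (mul_le_mul_right hc _).trans ?_
      rw [mul_left_comm, ENNReal.div_mul_cancel (hθ0 x) (measure_ne_top _ _)]
    refine ⟨⟨(j, ⟨m', hm'p⟩), ?_, ?_⟩, hj, hdet, hac hθT⟩
    · intro x
      refine (hbound x j _ hj.le (hθj x)).trans ?_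
      exact (mul_le_mul_right prob_le_one _).trans (mul_one _).le
    · intro x i hi
      rcases le_total i L with hiL | hiL
      · exact (hdet _ ((determinedBy_cylinder x i).mono hiL)).trans_le (h2 x i hiL)
      · refine (hbound x i _ hiL (hθi x i hiL hi)).trans ?_
        refine (mul_le_mul_right (h1 x) _).trans ?_
        rw [mul_assoc, ← pow_add, Nat.sub_add_cancel hiL]
  choose next hlt hdet hT using step
  have hinit : Inv (0, ⟨Measure.dirac fun _ => 0, inferInstance⟩) := by
    refine ⟨fun x => ?_, fun x i hi => ?_⟩
    · simp
    · obtain rfl : i = 0 := Nat.le_zero.1 hi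
      simp
  let S : ℕ → {s // Inv s} := fun n => Nat.rec ⟨_, hinit⟩ (fun n s => next n s) n
  have hS : ∀ n, S (n + 1) = next n (S n) := fun n => rfl
  have hLlt : ∀ n, (S n).1.1 < (S (n + 1)).1.1 := fun n => by rw [hS]; exact hlt n _
  have hLmono : Monotone fun n => (S n).1.1 := monotone_nat_of_le_succ fun n => (hLlt n).le
  have hLge : ∀ n, n ≤ (S n).1.1 := by
    intro n
    induction n with
    | zero => exact Nat.zero_le _
    | succ n ih => exact lt_of_le_of_lt ih (hLlt n)
  have hcons : ∀ k k', k ≤ k' → ∀ A, DeterminedBy (S k).1.1 A →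
      ((S k').1.2 : Measure (ℕ → Fin M)) A = ((S k).1.2 : Measure (ℕ → Fin M)) A := by
    intro k k' hk A hA
    induction k', hk using Nat.le_induction with
    | base => rfl
    | succ k' hk ih =>
      rw [hS, hdet k' (S k') A (hA.mono (hLmono hk)), ih]
  -- a weak limit of the stage measures
  obtain ⟨m, -, hm⟩ := isCompact_univ.ultrafilter_le_nhds
    ((hyperfilter ℕ).map fun n => (S n).1.2) (by simp)
  have hlim : ∀ k A, DeterminedBy (S k).1.1 A →
      (m : Measure (ℕ → Fin M)) A = ((S k).1.2 : Measure (ℕ → Fin M)) A := by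
    intro k A hA
    have ht : Tendsto (fun n => (S n).1.2) (hyperfilter ℕ : Filter ℕ) (𝓝 m) := hm
    have h1 := ProbabilityMeasure.tendsto_measure_of_null_frontier_of_tendsto' ht (E := A)
      (by rw [hA.isClopen.frontier_eq]; simp)
    have h2 : (fun n => ((S n).1.2 : Measure (ℕ → Fin M)) A) =ᶠ[(hyperfilter ℕ : Filter ℕ)]
        fun _ => ((S k).1.2 : Measure (ℕ → Fin M)) A := by
      have : ∀ᶠ n in (hyperfilter ℕ : Filter ℕ), k ≤ n :=
        Nat.hyperfilter_le_atTop (eventually_ge_atTop k)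
      filter_upwards [this] with n hn
      exact hcons k n hn A hA
    exact tendsto_nhds_unique h1 (tendsto_const_nhds.congr' h2.symm)
  refine ⟨m, inferInstance, fun n => ?_, fun x i => ?_⟩
  · have h1 := hlim (n + 1) _ (determinedBy_subset (S (n + 1)).1.1 (T n)).compl
    have h2 : (m : Measure (ℕ → Fin M)) {x | PiNat.cylinder x (S (n + 1)).1.1 ⊆ T n}ᶜ = 0 := by
      rw [h1, hS]; exact hT n (S n)
    refine measure_mono_null (Set.compl_subset_compl.2 fun x hx => ?_) h2
    exact hx (PiNat.self_mem_cylinder _ _)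
  · rw [hlim i _ ((determinedBy_cylinder x i).mono (hLge i))]
    exact (S i).2.2 x i (hLge i)

/-! ### Geometry of the coding map -/

lemma surjective_of_similarity {d : ℕ} (f : EuclideanSpace ℝ (Fin d) → EuclideanSpace ℝ (Fin d))
    (c : ℝ) (hc : 0 < c) (hf : ∀ x y, dist (f x) (f y) = c * dist x y) :
    Function.Surjective f := by
  have hiso : Isometry fun x => c⁻¹ • f x := Isometry.of_dist_eq fun x y => by
    rw [dist_smul₀, hf, Real.norm_of_nonneg (by positivity)]
    field_simp
  intro y
  have hs : Function.Surjective hiso.affineIsometryOfStrictConvexSpace :=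
    (AffineIsometry.toAffineIsometryEquiv hiso.affineIsometryOfStrictConvexSpace rfl).surjective
  obtain ⟨x, hx⟩ := hs (c⁻¹ • y)
  exact ⟨x, smul_right_injective _ (inv_ne_zero hc.ne') hx⟩

lemma prefixMap_dist {N d : ℕ} {lam : Fin N → ℝ}
    {f : Fin N → EuclideanSpace ℝ (Fin d) → EuclideanSpace ℝ (Fin d)}
    (hf : ∀ i x y, dist (f i x) (f i y) = lam i * dist x y)
    (x : ℕ → Fin N) (n : ℕ) (y z : EuclideanSpace ℝ (Fin d)) :
    dist (prefixMap f x n y) (prefixMap f x n z) =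
      (∏ k ∈ Finset.range n, lam (x k)) * dist y z := by
  induction n generalizing x with
  | zero => simp [prefixMap]
  | succ n ih =>
    rw [prefixMap, hf, ih, Finset.prod_range_succ']
    ring

lemma prefixMap_surjective {N d : ℕ} {lam : Fin N → ℝ} (hlam : ∀ i, lam i ∈ Set.Ioo (0 : ℝ) 1)
    {f : Fin N → EuclideanSpace ℝ (Fin d) → EuclideanSpace ℝ (Fin d)}
    (hf : ∀ i x y, dist (f i x) (f i y) = lam i * dist x y) (x : ℕ → Fin N) (n : ℕ) :
    Function.Surjective (prefixMap f x n) := by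
  induction n generalizing x with
  | zero => exact Function.surjective_id
  | succ n ih =>
    exact (surjective_of_similarity (f (x 0)) _ (hlam _).1 (hf _)).comp (ih _)

lemma prefixMap_image_subset {N : ℕ} {E : Type*} {f : Fin N → E → E} {U : Set E}
    (hU : ∀ i, f i '' U ⊆ U) (x : ℕ → Fin N) (n : ℕ) : prefixMap f x n '' U ⊆ U := by
  induction n generalizing x with
  | zero => simp [prefixMap]
  | succ n ih =>
    rintro _ ⟨y, hy, rfl⟩
    exact hU _ ⟨_, ih _ ⟨y, hy, rfl⟩, rfl⟩

lemma prefixMap_disjoint {N : ℕ} {E : Type*} {f : Fin N → E → E} {U : Set E}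
    (hinj : ∀ i, Function.Injective (f i))
    (hU : ∀ i, f i '' U ⊆ U) (hd : Pairwise fun i j => Disjoint (f i '' U) (f j '' U))
    (x x' : ℕ → Fin N) (n : ℕ) (hne : ∃ k < n, x k ≠ x' k) {y y' : E} (hy : y ∈ U) (hy' : y' ∈ U) :
    prefixMap f x n y ≠ prefixMap f x' n y' := by
  induction n generalizing x x' with
  | zero => obtain ⟨k, hk, _⟩ := hne; omega
  | succ n ih =>
    intro heq
    simp only [prefixMap] at heq
    by_cases h0 : x 0 = x' 0
    · rw [h0] at heq
      refine ih _ _ ?_ (hinj _ heq)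
      obtain ⟨k, hk, hkne⟩ := hne
      cases k with
      | zero => exact absurd h0 hkne
      | succ k => exact ⟨k, by omega, hkne⟩
    · refine Set.disjoint_left.1 (hd h0) ⟨prefixMap f (fun k => x (k + 1)) n y,
        prefixMap_image_subset hU (fun k => x (k + 1)) n ⟨y, hy, rfl⟩, rfl⟩ ?_
      exact ⟨prefixMap f (fun k => x' (k + 1)) n y',
        prefixMap_image_subset hU (fun k => x' (k + 1)) n ⟨y', hy', rfl⟩, heq.symm⟩

lemma prefixMap_add {N : ℕ} {E : Type*} (f : Fin N → E → E) (x : ℕ → Fin N) (n k : ℕ) (y : E) :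
    prefixMap f x (n + k) y = prefixMap f x n (prefixMap f (fun i => x (i + n)) k y) := by
  induction n generalizing x with
  | zero => simp [prefixMap]
  | succ n ih =>
    rw [show n + 1 + k = (n + k) + 1 by ring]
    simp only [prefixMap]
    rw [ih]
    rfl

/-- The coding map is approximated by the prefix compositions applied to any base point. -/
lemma exists_dist_coding_le {N d : ℕ} [NeZero N] {lam : Fin N → ℝ}
    (hlam : ∀ i, lam i ∈ Set.Ioo (0 : ℝ) 1)
    {f : Fin N → EuclideanSpace ℝ (Fin d) → EuclideanSpace ℝ (Fin d)}
    (hf : ∀ i x y, dist (f i x) (f i y) = lam i * dist x y)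
    {π : (ℕ → Fin N) → EuclideanSpace ℝ (Fin d)}
    (hπ : ∀ x, Filter.Tendsto (fun n => prefixMap f x n 0) Filter.atTop (nhds (π x)))
    (u : EuclideanSpace ℝ (Fin d)) :
    ∃ D > 0, ∀ x n, dist (π x) (prefixMap f x n u) ≤
      (∏ k ∈ Finset.range n, lam (x k)) * D := by
  obtain ⟨i₀, hi₀⟩ := Finite.exists_max lam
  obtain ⟨i₁, hi₁⟩ := Finite.exists_max fun i => ‖f i 0‖
  have hl1 : 0 < 1 - lam i₀ := by linarith [(hlam i₀).2]
  set A : ℝ := ‖f i₁ 0‖ / (1 - lam i₀) with hA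
  have hA0 : 0 ≤ A := by positivity
  have hbd : ∀ (k : ℕ) (x : ℕ → Fin N), ‖prefixMap f x k 0‖ ≤ A := by
    intro k
    induction k with
    | zero => intro x; simpa [prefixMap] using hA0
    | succ k ih =>
      intro x
      simp only [prefixMap]
      have h1 : ‖f (x 0) (prefixMap f (fun k => x (k + 1)) k 0)‖ ≤
          ‖f (x 0) 0‖ + lam (x 0) * ‖prefixMap f (fun k => x (k + 1)) k 0‖ := by
        have h2 := hf (x 0) (prefixMap f (fun k => x (k + 1)) k 0) 0
        rw [dist_zero_right] at h2
        rw [← h2, dist_eq_norm]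
        have := norm_add_le (f (x 0) 0)
          (f (x 0) (prefixMap f (fun k => x (k + 1)) k 0) - f (x 0) 0)
        simpa using this
      have h3 : lam (x 0) * ‖prefixMap f (fun k => x (k + 1)) k 0‖ ≤ lam i₀ * A :=
        mul_le_mul (hi₀ _) (ih _) (norm_nonneg _) (hlam _).1.le
      have h4 : ‖f i₁ 0‖ = A * (1 - lam i₀) := by rw [hA]; field_simp
      have h5 := hi₁ (x 0)
      linarith
  refine ⟨A + ‖u‖ + 1, by positivity, fun x n => ?_⟩
  have ht : Tendsto (fun k => dist (prefixMap f x (n + k) 0) (prefixMap f x n u)) atTop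
      (𝓝 (dist (π x) (prefixMap f x n u))) := by
    have := (hπ x).comp (tendsto_add_atTop_nat n)
    simp only [Function.comp_def, add_comm _ n] at this
    exact this.dist tendsto_const_nhds
  refine le_of_tendsto ht (Eventually.of_forall fun k => ?_)
  rw [prefixMap_add, prefixMap_dist hf]
  refine mul_le_mul_of_nonneg_left ?_ (Finset.prod_nonneg fun _ _ => (hlam _).1.le)
  refine (dist_le_norm_add_norm _ _).trans ?_
  linarith [hbd k fun i => x (i + n)]

/-- Distinct compositions of the same length send the centre of a ball in `U` to points that are
far apart, by the open set condition. -/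
lemma prefixMap_separated {N d : ℕ} {lam : Fin N → ℝ} (hlam : ∀ i, lam i ∈ Set.Ioo (0 : ℝ) 1)
    {f : Fin N → EuclideanSpace ℝ (Fin d) → EuclideanSpace ℝ (Fin d)}
    (hf : ∀ i x y, dist (f i x) (f i y) = lam i * dist x y)
    {U : Set (EuclideanSpace ℝ (Fin d))} (hU : ∀ i, f i '' U ⊆ U)
    (hd : Pairwise fun i j => Disjoint (f i '' U) (f j '' U))
    {u : EuclideanSpace ℝ (Fin d)} {r : ℝ} (hr : 0 < r) (hball : Metric.ball u r ⊆ U)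
    (x x' : ℕ → Fin N) (n : ℕ) (hne : ∃ k < n, x k ≠ x' k) :
    (∏ k ∈ Finset.range n, lam (x k)) * r ≤ dist (prefixMap f x n u) (prefixMap f x' n u) := by
  have hinj : ∀ i, Function.Injective (f i) := fun i a b hab => by
    have := hf i a b
    rw [hab, dist_self] at this
    exact dist_eq_zero.1 ((mul_eq_zero.1 this.symm).resolve_left (hlam i).1.ne')
  have hpos : 0 < ∏ k ∈ Finset.range n, lam (x k) := Finset.prod_pos fun _ _ => (hlam _).1
  by_contra! hlt
  obtain ⟨y, hy⟩ := prefixMap_surjective hlam hf x n (prefixMap f x' n u)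
  rw [← hy, prefixMap_dist hf, mul_lt_mul_iff_right₀ hpos, dist_comm] at hlt
  exact prefixMap_disjoint hinj hU hd x x' n hne (hball (Metric.mem_ball.2 hlt))
    (hball (Metric.mem_ball_self hr)) hy

/-- A uniform bound, independent of the scale `R`, for the number of `R * r`-separated points in a
ball of radius `R * D`. -/
lemma exists_card_separated_le (d : ℕ) (r D : ℝ) (hr : 0 < r) :
    ∃ c : ℕ, ∀ (R : ℝ) (z : EuclideanSpace ℝ (Fin d)) (ι : Type) (W : Finset ι)
      (a : ι → EuclideanSpace ℝ (Fin d)), 0 < R → (∀ i ∈ W, dist (a i) z ≤ R * D) →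
      (∀ i ∈ W, ∀ j ∈ W, i ≠ j → R * r ≤ dist (a i) (a j)) → W.card ≤ c := by
  classical
  have htb : TotallyBounded (Metric.closedBall (0 : EuclideanSpace ℝ (Fin d)) D) :=
    (isCompact_closedBall _ _).totallyBounded
  obtain ⟨t, htf, ht⟩ := Metric.totallyBounded_iff.1 htb (r / 2) (by positivity)
  refine ⟨htf.toFinset.card, fun R z ι W a hR hW hsep => ?_⟩
  -- rescale to the unit scale
  have hmem : ∀ i ∈ W, ∃ y ∈ t, dist (R⁻¹ • (a i - z)) y < r / 2 := by
    intro i hi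
    have : R⁻¹ • (a i - z) ∈ Metric.closedBall (0 : EuclideanSpace ℝ (Fin d)) D := by
      rw [mem_closedBall_zero_iff, norm_smul, ← dist_eq_norm, Real.norm_of_nonneg (by positivity)]
      have := hW i hi
      rw [inv_mul_le_iff₀ hR]
      exact this
    have := ht this
    simpa using this
  choose! y hyt hyd using hmem
  refine Finset.card_le_card_of_injOn y (fun i hi => by simpa using hyt i hi) ?_
  intro i hi j hj hij
  by_contra hne
  have h1 := hsep i hi j hj hne
  have h2 : dist (R⁻¹ • (a i - z)) (R⁻¹ • (a j - z)) < r := by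
    have h3 := hyd i hi
    have h4 := hyd j hj
    rw [← hij] at h4
    calc _ ≤ _ := dist_triangle_right _ _ (y i)
      _ < r := by linarith
  rw [dist_smul₀, dist_sub_right, Real.norm_of_nonneg (by positivity), inv_mul_lt_iff₀ hR] at h2
  linarith

/-! ### Mass distribution -/

/-- The mass distribution principle along a geometric sequence of scales.  The map `Ψ` need not be
measurable: only outer measures are compared. -/
lemma le_dimH_of_mass {Ω : Type*} [MeasurableSpace Ω] {d : ℕ}
    (Ψ : Ω → EuclideanSpace ℝ (Fin d)) (m : Measure Ω) [IsProbabilityMeasure m] (A : Set Ω)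
    (hA : m Aᶜ = 0) (ρ t : ℝ) (hρ0 : 0 < ρ) (hρ1 : ρ < 1) (ht : 0 < t) (C : ℝ≥0∞) (hC : C ≠ ⊤)
    (hC0 : C ≠ 0)
    (h : ∀ (s : Set (EuclideanSpace ℝ (Fin d))) (i : ℕ), Metric.ediam s ≤ ENNReal.ofReal (ρ ^ i) →
      m (Ψ ⁻¹' s) ≤ C * ENNReal.ofReal (ρ ^ t) ^ i) :
    ENNReal.ofReal t ≤ dimH (Ψ '' A) := by
  have hρt0 : 0 < ρ ^ t := Real.rpow_pos_of_pos hρ0 t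
  have hρt1 : ρ ^ t < 1 := Real.rpow_lt_one hρ0.le hρ1 ht
  set C' : ℝ≥0∞ := C * (ENNReal.ofReal (ρ ^ t))⁻¹ with hC'
  have hoρ : ENNReal.ofReal (ρ ^ t) ≠ 0 := by simpa using hρt0
  have hC'0 : C' ≠ 0 := mul_ne_zero hC0 (ENNReal.inv_ne_zero.2 ENNReal.ofReal_ne_top)
  have hC't : C' ≠ ⊤ := ENNReal.mul_ne_top hC (ENNReal.inv_ne_top.2 hoρ)
  have key : ∀ s : Set (EuclideanSpace ℝ (Fin d)), Metric.ediam s ≤ 1 →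
      m (Ψ ⁻¹' s) ≤ C' * Metric.ediam s ^ t := by
    intro s hs
    rcases eq_or_ne (Metric.ediam s) 0 with h0 | h0
    · have hlim : Tendsto (fun i : ℕ => C * ENNReal.ofReal (ρ ^ t) ^ i) atTop (𝓝 (C * 0)) :=
        ENNReal.Tendsto.const_mul (ENNReal.tendsto_pow_atTop_nhds_zero_of_lt_one
          (by simpa using hρt1)) (Or.inr hC)
      rw [mul_zero] at hlim
      have := ge_of_tendsto' hlim fun i => h s i (by rw [h0]; exact zero_le)
      exact this.trans zero_le
    · have hst : Metric.ediam s ≠ ⊤ := (hs.trans_lt ENNReal.one_lt_top).ne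
      have hx0 : 0 < (Metric.ediam s).toReal := ENNReal.toReal_pos h0 hst
      have hx1 : (Metric.ediam s).toReal ≤ 1 := by
        simpa using ENNReal.toReal_mono ENNReal.one_ne_top hs
      obtain ⟨i, hi1, hi2⟩ := exists_nat_pow_near_of_lt_one hx0 hx1 hρ0 hρ1
      have h1 := h s i (by rw [← ENNReal.ofReal_toReal hst]; exact ENNReal.ofReal_le_ofReal hi2)
      refine h1.trans ?_
      have h2 : ENNReal.ofReal (ρ ^ t) ^ (i + 1) ≤ Metric.ediam s ^ t := by
        rw [← ENNReal.ofReal_toReal hst, ENNReal.ofReal_rpow_of_pos hx0,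
          ← ENNReal.ofReal_pow hρt0.le]
        refine ENNReal.ofReal_le_ofReal ?_
        rw [← Real.rpow_mul_natCast hρ0.le, mul_comm t, Real.rpow_natCast_mul hρ0.le]
        exact Real.rpow_le_rpow (by positivity) hi1.le ht.le
      calc C * ENNReal.ofReal (ρ ^ t) ^ i
          = C * (ENNReal.ofReal (ρ ^ t))⁻¹ * ENNReal.ofReal (ρ ^ t) ^ (i + 1) := by
            rw [pow_succ', mul_assoc C, ← mul_assoc _ (ENNReal.ofReal (ρ ^ t)),
              ENNReal.inv_mul_cancel hoρ ENNReal.ofReal_ne_top, one_mul]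
        _ ≤ C' * Metric.ediam s ^ t := by gcongr
  have hle : C'⁻¹ • OuterMeasure.map Ψ m.toOuterMeasure ≤
      OuterMeasure.mkMetric fun r : ℝ≥0∞ => r ^ t := by
    refine OuterMeasure.le_mkMetric _ _ 1 one_pos fun s hs => ?_
    have h1 := key s hs
    rw [smul_apply, OuterMeasure.map_apply, smul_eq_mul]
    calc C'⁻¹ * m (Ψ ⁻¹' s) ≤ C'⁻¹ * (C' * Metric.ediam s ^ t) := by gcongr
      _ = Metric.ediam s ^ t := by
        rw [← mul_assoc, ENNReal.inv_mul_cancel hC'0 hC't, one_mul]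
  have hpos : μH[(t.toNNReal : ℝ)] (Ψ '' A) ≠ 0 := by
    rw [Real.coe_toNNReal t ht.le]
    intro hz
    have h1 := hle (Ψ '' A)
    rw [← Measure.mkMetric_toOuterMeasure] at h1
    change _ ≤ μH[t] (Ψ '' A) at h1
    rw [hz, smul_apply, OuterMeasure.map_apply, smul_eq_mul] at h1
    have h2 : m (Ψ ⁻¹' (Ψ '' A)) = 0 := by
      have := nonpos_iff_eq_zero.1 h1
      exact (mul_eq_zero.1 this).resolve_left (ENNReal.inv_ne_zero.2 hC't)
    have h3 : m A = 0 := measure_mono_null (Set.subset_preimage_image Ψ A) h2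
    have h4 : m Set.univ = 0 := by
      rw [← Set.union_compl_self A]
      exact measure_union_null h3 hA
    simp at h4
  exact le_dimH_of_hausdorffMeasure_ne_zero hpos

/-- A measure on block sequences with Frostman-type decay on cylinders is carried by sets whose
image under the coding map has dimension at least `t`: by the open set condition a set of diameter
`ρ ^ i` meets boundedly many pieces of the `i`-th generation. -/
lemma le_dimH_of_frostman {N d M b : ℕ} [NeZero N] [NeZero M] {lam : Fin N → ℝ}
    (hlam : ∀ i, lam i ∈ Set.Ioo (0 : ℝ) 1)
    {f : Fin N → EuclideanSpace ℝ (Fin d) → EuclideanSpace ℝ (Fin d)}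
    (hf : ∀ i x y, dist (f i x) (f i y) = lam i * dist x y)
    {U : Set (EuclideanSpace ℝ (Fin d))} (hUne : U.Nonempty) (hUo : IsOpen U)
    (hU : ∀ i, f i '' U ⊆ U) (hd : Pairwise fun i j => Disjoint (f i '' U) (f j '' U))
    {π : (ℕ → Fin N) → EuclideanSpace ℝ (Fin d)}
    (hπ : ∀ x, Filter.Tendsto (fun n => prefixMap f x n 0) Filter.atTop (nhds (π x)))
    (ρ t : ℝ) (hρ0 : 0 < ρ) (hρ1 : ρ < 1) (ht : 0 < t)
    (Γ : (ℕ → Fin M) → ℕ → Fin N)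
    (hΓprod : ∀ y i, ∏ k ∈ Finset.range (b * i), lam (Γ y k) = ρ ^ i)
    (hΓsep : ∀ y y' i, y' ∉ PiNat.cylinder y i → ∃ k < b * i, Γ y k ≠ Γ y' k)
    (m : Measure (ℕ → Fin M)) [IsProbabilityMeasure m]
    (hm : ∀ x i, m (PiNat.cylinder x i) ≤ 5 * ENNReal.ofReal (ρ ^ t) ^ i)
    (A : Set (ℕ → Fin M)) (hA : m Aᶜ = 0) :
    ENNReal.ofReal t ≤ dimH (π '' (Γ '' A)) := by
  classical
  obtain ⟨u, hu⟩ := hUne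
  obtain ⟨r, hr, hball⟩ := Metric.isOpen_iff.1 hUo u hu
  obtain ⟨D, hD, hdist⟩ := exists_dist_coding_le hlam hf hπ u
  obtain ⟨c, hc⟩ := exists_card_separated_le d r (D + 1) hr
  rw [← Set.image_comp]
  refine le_dimH_of_mass (π ∘ Γ) m A hA ρ t hρ0 hρ1 ht (((c : ℝ≥0∞) + 1) * 5)
    (by finiteness) (by simp) fun s i hs => ?_
  rcases ((π ∘ Γ) ⁻¹' s).eq_empty_or_nonempty with hemp | ⟨y₀, hy₀⟩
  · simp [hemp]
  -- representatives of the cylinders of depth `i`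
  set e : (Fin i → Fin M) → (ℕ → Fin M) := fun w n => if h : n < i then w ⟨n, h⟩ else 0 with he
  set W : Finset (Fin i → Fin M) :=
    Finset.univ.filter fun w => (PiNat.cylinder (e w) i ∩ (π ∘ Γ) ⁻¹' s).Nonempty with hW
  have hW' : ∀ w ∈ W, ∃ y, y ∈ PiNat.cylinder (e w) i ∧ π (Γ y) ∈ s := fun w hw => by
    obtain ⟨y, hy⟩ := (Finset.mem_filter.1 hw).2
    exact ⟨y, hy⟩
  choose! y hy hys using hW'
  have hcard : W.card ≤ c := by
    refine hc (ρ ^ i) (π (Γ y₀)) _ W (fun w => prefixMap f (Γ (y w)) (b * i) u) (by positivity)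
      (fun w hw => ?_) (fun w hw w' hw' hne => ?_)
    · have h1 := hdist (Γ (y w)) (b * i)
      rw [hΓprod, dist_comm] at h1
      have h2 : dist (π (Γ (y w))) (π (Γ y₀)) ≤ ρ ^ i := by
        have h3 := (Metric.edist_le_ediam_of_mem (hys w hw) hy₀).trans hs
        rw [edist_dist] at h3
        exact (ENNReal.ofReal_le_ofReal_iff (by positivity)).1 h3
      calc _ ≤ _ := dist_triangle _ (π (Γ (y w))) _
        _ ≤ ρ ^ i * (D + 1) := by linarith
    · have h1 : y w' ∉ PiNat.cylinder (y w) i := by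
        intro hmem
        refine hne (funext fun k => ?_)
        have h2 := PiNat.mem_cylinder_iff.1 hmem k k.2
        have h3 := PiNat.mem_cylinder_iff.1 (hy w hw) k k.2
        have h4 := PiNat.mem_cylinder_iff.1 (hy w' hw') k k.2
        have h5 := h3.symm.trans (h2.symm.trans h4)
        simpa [he] using h5
      have h2 := prefixMap_separated hlam hf hU hd hr hball (Γ (y w)) (Γ (y w')) (b * i)
        (hΓsep _ _ _ h1)
      rwa [hΓprod] at h2
  have hsub : (π ∘ Γ) ⁻¹' s ⊆ ⋃ w ∈ W, PiNat.cylinder (e w) i := by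
    intro x hx
    have hxe : x ∈ PiNat.cylinder (e fun k : Fin i => x k) i := by
      rw [PiNat.mem_cylinder_iff]
      intro k hk
      simp [he, hk]
    simp only [Set.mem_iUnion, exists_prop]
    exact ⟨fun k : Fin i => x k, Finset.mem_filter.2 ⟨Finset.mem_univ _, x, hxe, hx⟩, hxe⟩
  calc m ((π ∘ Γ) ⁻¹' s) ≤ m (⋃ w ∈ W, PiNat.cylinder (e w) i) := measure_mono hsub
    _ ≤ ∑ w ∈ W, m (PiNat.cylinder (e w) i) := measure_biUnion_finset_le _ _
    _ ≤ ∑ _w ∈ W, 5 * ENNReal.ofReal (ρ ^ t) ^ i := Finset.sum_le_sum fun w _ => hm _ _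
    _ = (W.card : ℝ≥0∞) * (5 * ENNReal.ofReal (ρ ^ t) ^ i) := by
      rw [Finset.sum_const, nsmul_eq_mul]
    _ ≤ ((c : ℝ≥0∞) + 1) * (5 * ENNReal.ofReal (ρ ^ t) ^ i) := by
      gcongr
      exact (Nat.cast_le.2 hcard).trans le_self_add
    _ = _ := by ring

/-! ### Substitution of blocks and empirical measures -/

/-- The sequence obtained by substituting for each symbol `a` of `y` the word `g a` of length `b`. -/
def blockMap {N M b : ℕ} (hb : 0 < b) (g : Fin M → Fin b → Fin N) (y : ℕ → Fin M) (n : ℕ) :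
    Fin N :=
  g (y (n / b)) ⟨n % b, Nat.mod_lt n hb⟩

/-- The extension of a finite word by the constant symbol `0`. -/
def extendWord {M j : ℕ} [NeZero M] (w : Fin j → Fin M) (n : ℕ) : Fin M :=
  if h : n < j then w ⟨n, h⟩ else 0

lemma extendWord_coe {M j : ℕ} [NeZero M] (w : Fin j → Fin M) (k : Fin j) :
    extendWord w (k : ℕ) = w k := by simp [extendWord]

lemma blockMap_prod {N M b : ℕ} (hb : 0 < b) (g : Fin M → Fin b → Fin N) (r : Fin N → ℝ) (q : ℝ)
    (hq : ∀ a, wordProd r (g a) = q) (y : ℕ → Fin M) (i : ℕ) :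
    ∏ k ∈ Finset.range (b * i), r (blockMap hb g y k) = q ^ i := by
  induction i with
  | zero => simp
  | succ i ih =>
    rw [Nat.mul_succ, Finset.prod_range_add, ih, pow_succ, ← hq (y i), wordProd,
      Finset.prod_range]
    congr 1
    refine Finset.prod_congr rfl fun k _ => ?_
    have h1 : (b * i + (k : ℕ)) / b = i := by
      rw [Nat.mul_add_div hb, Nat.div_eq_of_lt k.2, add_zero]
    have h2 : (b * i + (k : ℕ)) % b = k := by
      rw [Nat.mul_add_mod, Nat.mod_eq_of_lt k.2]
    simp only [blockMap, h1, h2]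

lemma blockMap_congr {N M b : ℕ} (hb : 0 < b) (g : Fin M → Fin b → Fin N) {y y' : ℕ → Fin M}
    {i : ℕ} (h : y' ∈ PiNat.cylinder y i) {k : ℕ} (hk : k < b * i) :
    blockMap hb g y' k = blockMap hb g y k := by
  have := PiNat.mem_cylinder_iff.1 h (k / b) (Nat.div_lt_of_lt_mul hk)
  simp only [blockMap, this]

lemma exists_blockMap_ne {N M b : ℕ} (hb : 0 < b) {g : Fin M → Fin b → Fin N}
    (hg : Function.Injective g) (y y' : ℕ → Fin M) (i : ℕ) (h : y' ∉ PiNat.cylinder y i) :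
    ∃ k < b * i, blockMap hb g y k ≠ blockMap hb g y' k := by
  by_contra! hcon
  refine h (PiNat.mem_cylinder_iff.2 fun a ha => ?_)
  refine hg (funext fun c => ?_)
  have hlt : b * a + c < b * i := by
    calc b * a + c < b * a + b := by have := c.2; omega
      _ = b * (a + 1) := by ring
      _ ≤ b * i := Nat.mul_le_mul_left _ ha
  have := hcon (b * a + c) hlt
  have h1 : (b * a + (c : ℕ)) / b = a := by
    rw [Nat.mul_add_div hb, Nat.div_eq_of_lt c.2, add_zero]
  have h2 : (b * a + (c : ℕ)) % b = c := by
    rw [Nat.mul_add_mod, Nat.mod_eq_of_lt c.2]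
  simp only [blockMap, h1, h2] at this
  exact this.symm

/-- The word of length `b * j` obtained by concatenating the words `g (w 0), …, g (w (j - 1))`. -/
def concatWord {N M b : ℕ} [NeZero M] (hb : 0 < b) (g : Fin M → Fin b → Fin N) {j : ℕ}
    (w : Fin j → Fin M) (c : Fin (b * j)) : Fin N :=
  blockMap hb g (extendWord w) c

lemma concatWord_injective {N M b : ℕ} [NeZero M] (hb : 0 < b) {g : Fin M → Fin b → Fin N}
    (hg : Function.Injective g) (j : ℕ) :
    Function.Injective (concatWord hb g : (Fin j → Fin M) → _) := by
  intro w w' h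
  by_cases hc : extendWord w' ∈ PiNat.cylinder (extendWord w) j
  · funext k
    have := PiNat.mem_cylinder_iff.1 hc k k.2
    rw [extendWord_coe, extendWord_coe] at this
    exact this.symm
  · obtain ⟨k, hk, hne⟩ := exists_blockMap_ne hb hg _ _ _ hc
    exact absurd (congrFun h ⟨k, hk⟩) hne

open Classical in
/-- The words over `Fin M` of length `j` that agree with `x` in the first `i` places. -/
def prefixWords {M : ℕ} (j : ℕ) (x : ℕ → Fin M) (i : ℕ) : Finset (Fin j → Fin M) :=
  Fintype.piFinset fun k : Fin j => if (k : ℕ) < i then {x k} else Finset.univ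

lemma mem_prefixWords {M j : ℕ} [NeZero M] {x : ℕ → Fin M} {i : ℕ} (hij : i ≤ j)
    {w : Fin j → Fin M} :
    w ∈ prefixWords j x i ↔ extendWord w ∈ PiNat.cylinder x i := by
  simp only [prefixWords, Fintype.mem_piFinset, PiNat.mem_cylinder_iff]
  constructor
  · intro h k hk
    have := h ⟨k, hk.trans_le hij⟩
    simp only [hk, if_true, Finset.mem_singleton] at this
    rw [← this, ← extendWord_coe w]
  · intro h k
    split_ifs with hk
    · rw [Finset.mem_singleton, ← h k hk, extendWord_coe]
    · exact Finset.mem_univ _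

lemma card_prefixWords {M j : ℕ} (x : ℕ → Fin M) {i : ℕ} (hij : i ≤ j) :
    (prefixWords j x i).card = M ^ (j - i) := by
  classical
  rw [prefixWords, Fintype.card_piFinset]
  have : ∀ k : Fin j, (if (k : ℕ) < i then ({x k} : Finset (Fin M)) else Finset.univ).card =
      (fun k : ℕ => if k < i then 1 else M) k := by
    intro k; dsimp only; split_ifs <;> simp
  rw [Finset.prod_congr rfl fun k _ => this k, Fin.prod_univ_eq_prod_range
    (fun k : ℕ => if k < i then 1 else M) j]
  obtain ⟨e, rfl⟩ := Nat.exists_eq_add_of_le hij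
  rw [Finset.prod_range_add, Finset.prod_congr rfl (g := fun _ => 1)]
  · simp
  · intro k hk; simp [Finset.mem_range.1 hk]

open Classical in
/-- The concatenations of `j` words `g a` whose first `i` indices are those of `x`. -/
def prefixBlocks {N M b : ℕ} [NeZero M] (hb : 0 < b) (g : Fin M → Fin b → Fin N) (j : ℕ)
    (x : ℕ → Fin M) (i : ℕ) : Finset (Fin (b * j) → Fin N) :=
  (prefixWords j x i).image (concatWord hb g)

lemma prefixBlocks_extend {N M b : ℕ} [NeZero M] (hb : 0 < b) (g : Fin M → Fin b → Fin N) (j : ℕ)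
    (x : ℕ → Fin M) (i : ℕ) :
    prefixBlocks hb g j (extendWord fun k : Fin j => x k) i = prefixBlocks hb g j x i := by
  simp only [prefixBlocks, prefixWords, extendWord_coe]

lemma sum_prefixBlocks {N M b : ℕ} [NeZero M] (hb : 0 < b) {g : Fin M → Fin b → Fin N}
    (hg : Function.Injective g) (p : Fin N → ℝ) (P : ℝ) (hP : ∀ a, wordProd p (g a) = P)
    (j : ℕ) (x : ℕ → Fin M) (i : ℕ) (hij : i ≤ j) :
    ∑ w ∈ prefixBlocks hb g j x i, wordProd p w = (M : ℝ) ^ (j - i) * P ^ j := by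
  rw [prefixBlocks, Finset.sum_image fun a _ b _ h => concatWord_injective hb hg j h]
  rw [Finset.sum_congr rfl (g := fun _ => P ^ j), Finset.sum_const, card_prefixWords x hij,
    nsmul_eq_mul, Nat.cast_pow]
  intro w _
  rw [wordProd, ← blockMap_prod hb g p P hP (extendWord w) j, Finset.prod_range]
  rfl

open Classical in
/-- The empirical measure of the blocks of `o`, of length `b * j` and position `r ∈ R`, that are
concatenations of words `g a`. -/
def empirical {N M b : ℕ} [NeZero M] (hb : 0 < b) (g : Fin M → Fin b → Fin N) (j : ℕ)
    (R : Finset ℕ) (o : ℕ → Fin N) : Measure (ℕ → Fin M) :=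
  ∑ r ∈ R, ∑ w : Fin j → Fin M,
    if (fun c : Fin (b * j) => o (r * (b * j) + c)) = concatWord hb g w then
      Measure.dirac (extendWord w) else 0

lemma empirical_cylinder {N M b : ℕ} [NeZero M] (hb : 0 < b) {g : Fin M → Fin b → Fin N}
    (hg : Function.Injective g) (j : ℕ) (R : Finset ℕ) (o : ℕ → Fin N) (x : ℕ → Fin M) (i : ℕ)
    (hij : i ≤ j) :
    empirical hb g j R o (PiNat.cylinder x i) =
      ENNReal.ofReal (blockCount R (prefixBlocks hb g j x i) o) := by
  classical
  rw [empirical, blockCount, ENNReal.ofReal_sum_of_nonneg (fun _ _ => by split_ifs <;> norm_num),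
    Measure.finsetSum_apply]
  refine Finset.sum_congr rfl fun r _ => ?_
  rw [Measure.finsetSum_apply]
  set u := fun c : Fin (b * j) => o (r * (b * j) + c)
  have hm : MeasurableSet (PiNat.cylinder x i) := (PiNat.isOpen_cylinder _ _ _).measurableSet
  have hterm : ∀ w : Fin j → Fin M, (if u = concatWord hb g w then Measure.dirac (extendWord w)
      else (0 : Measure (ℕ → Fin M))) (PiNat.cylinder x i) =
      if u = concatWord hb g w ∧ w ∈ prefixWords j x i then 1 else 0 := by
    intro w
    by_cases h1 : u = concatWord hb g w
    · rw [if_pos h1, Measure.dirac_apply' _ hm, Set.indicator_apply]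
      simp only [h1, true_and, mem_prefixWords hij, Pi.one_apply]
    · simp [h1]
  rw [Finset.sum_congr rfl fun w _ => hterm w]
  by_cases hu : u ∈ prefixBlocks hb g j x i
  · rw [if_pos hu, ENNReal.ofReal_one]
    obtain ⟨w, hw, hwu⟩ := Finset.mem_image.1 hu
    rw [Finset.sum_eq_single w, if_pos ⟨hwu.symm, hw⟩]
    · intro w' _ hne
      rw [if_neg]
      rintro ⟨h1, _⟩
      exact hne (concatWord_injective hb hg j (h1.symm.trans hwu.symm))
    · intro h; exact absurd (Finset.mem_univ _) h
  · rw [if_neg hu, ENNReal.ofReal_zero]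
    refine Finset.sum_eq_zero fun w _ => if_neg ?_
    rintro ⟨h1, h2⟩
    exact hu (Finset.mem_image.2 ⟨w, h2, h1.symm⟩)

instance isFiniteMeasure_empirical {N M b : ℕ} [NeZero M] (hb : 0 < b) (g : Fin M → Fin b → Fin N) (j : ℕ)
    (R : Finset ℕ) (o : ℕ → Fin N) : IsFiniteMeasure (empirical hb g j R o) := by
  classical
  constructor
  rw [empirical, Measure.finsetSum_apply]
  refine ENNReal.sum_lt_top.2 fun r _ => ?_
  rw [Measure.finsetSum_apply]
  refine ENNReal.sum_lt_top.2 fun w _ => ?_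
  split_ifs <;> simp

/-- The points of the empirical measure lie in the covering cylinders, since the blocks in question
are at least as long as the targets. -/
lemma empirical_support {N M b : ℕ} [NeZero M] (hb : 0 < b) (g : Fin M → Fin b → Fin N) (j : ℕ)
    (R : Finset ℕ) (o : ℕ → Fin N) (ℓ : ℕ → ℕ) (n₀ : ℕ)
    (hR : ∀ r ∈ R, n₀ ≤ r * (b * j) ∧ ℓ (r * (b * j)) ≤ b * j) :
    empirical hb g j R o {x | PiNat.cylinder x j ⊆ blockMap hb g ⁻¹'
      ⋃ m, ⋃ _ : n₀ ≤ m, _root_.cylinder (fun c : Fin (ℓ m) => o (m + (c : ℕ)))}ᶜ = 0 := by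
  classical
  rw [empirical, Measure.finsetSum_apply]
  refine Finset.sum_eq_zero fun r hr => ?_
  rw [Measure.finsetSum_apply]
  refine Finset.sum_eq_zero fun w _ => ?_
  split_ifs with h
  · rw [Measure.dirac_apply, Set.indicator_of_notMem]
    rw [Set.notMem_compl_iff]
    intro y hy
    obtain ⟨h1, h2⟩ := hR r hr
    simp only [Set.mem_preimage, Set.mem_iUnion]
    refine ⟨r * (b * j), h1, fun c => ?_⟩
    have hc : (c : ℕ) < b * j := c.2.trans_le h2
    rw [blockMap_congr hb g hy hc]
    exact (congrFun h ⟨c, hc⟩).symm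
  · simp

/-! ### Almost sure distribution of blocks -/

/-- Outside an event of small probability, all the counts `blockCount R (prefixBlocks hb g j x i)`
are within a constant factor, up to the additive error `j ^ 2`, of their means. -/
lemma measure_bad_le {N M b : ℕ} [NeZero M] (hb : 0 < b) {g : Fin M → Fin b → Fin N}
    (hg : Function.Injective g) (p : Fin N → ℝ) (hp : ∀ i, 0 < p i)
    (hpsum : ∑ i, p i = 1) (μ : Measure (ℕ → Fin N)) [IsProbabilityMeasure μ]
    (hμ : ∀ (m : ℕ) (w : Fin m → Fin N), μ (_root_.cylinder w) = ENNReal.ofReal (wordProd p w))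
    (P : ℝ) (hP : ∀ a, wordProd p (g a) = P) (i₀ j : ℕ) (hj : 0 < j) (hij : i₀ ≤ j)
    (R : Finset ℕ) (hK : 8 * (j : ℝ) ^ 2 ≤ R.card * ((M : ℝ) ^ (j - i₀) * P ^ j)) :
    μ.real {o | ¬ ∀ x : ℕ → Fin M,
      R.card * ((M : ℝ) ^ (j - i₀) * P ^ j) / 2 < blockCount R (prefixBlocks hb g j x i₀) o ∧
      ∀ i ≤ j, blockCount R (prefixBlocks hb g j x i) o <
        2 * (R.card * ((M : ℝ) ^ (j - i) * P ^ j)) + (j : ℝ) ^ 2} ≤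
      (M : ℝ) ^ j * ((j + 2) * Real.exp (-(j : ℝ) ^ 2)) := by
  have : NeZero (b * j) := ⟨(Nat.mul_pos hb hj).ne'⟩
  set lo : (Fin j → Fin M) → Set (ℕ → Fin N) := fun v =>
    {o | blockCount R (prefixBlocks hb g j (extendWord v) i₀) o ≤
      R.card * ((M : ℝ) ^ (j - i₀) * P ^ j) / 2} with hlo
  set hi : (Fin j → Fin M) → ℕ → Set (ℕ → Fin N) := fun v i =>
    {o | 2 * (R.card * ((M : ℝ) ^ (j - i) * P ^ j)) + (j : ℝ) ^ 2 ≤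
      blockCount R (prefixBlocks hb g j (extendWord v) i) o} with hhi
  have hsub : {o | ¬ ∀ x : ℕ → Fin M,
      R.card * ((M : ℝ) ^ (j - i₀) * P ^ j) / 2 < blockCount R (prefixBlocks hb g j x i₀) o ∧
      ∀ i ≤ j, blockCount R (prefixBlocks hb g j x i) o <
        2 * (R.card * ((M : ℝ) ^ (j - i) * P ^ j)) + (j : ℝ) ^ 2} ⊆
      ⋃ v ∈ (Finset.univ : Finset (Fin j → Fin M)),
        (lo v ∪ ⋃ i ∈ Finset.range (j + 1), hi v i) := by
    intro o ho
    by_contra hcon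
    refine ho fun x => ?_
    simp only [Set.mem_iUnion, Set.mem_union, not_exists, not_or, exists_prop, not_and,
      Finset.mem_univ, Finset.mem_range, forall_true_left, hlo, hhi, Set.mem_ofPred_eq,
      not_le] at hcon
    obtain ⟨h1, h2⟩ := hcon fun k : Fin j => x k
    simp only [prefixBlocks_extend] at h1 h2
    exact ⟨h1, fun i hi => h2 i (by omega)⟩
  have hlo_le : ∀ v, μ.real (lo v) ≤ Real.exp (-(j : ℝ) ^ 2) := fun v => by
    refine ((blockCount_tails p hp hpsum μ hμ R (prefixBlocks hb g j (extendWord v) i₀) _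
      (sum_prefixBlocks hb hg p P hP j _ i₀ hij).symm 0).2).trans (Real.exp_le_exp.2 ?_)
    linarith
  have hhi_le : ∀ v, ∀ i ∈ Finset.range (j + 1), μ.real (hi v i) ≤ Real.exp (-(j : ℝ) ^ 2) :=
    fun v i hi => (blockCount_tails p hp hpsum μ hμ R (prefixBlocks hb g j (extendWord v) i) _
      (sum_prefixBlocks hb hg p P hP j _ i (by have := Finset.mem_range.1 hi; omega)).symm _).1
  calc _ ≤ _ := measureReal_mono hsub (measure_ne_top _ _)
    _ ≤ ∑ v : Fin j → Fin M, μ.real (lo v ∪ ⋃ i ∈ Finset.range (j + 1), hi v i) :=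
      measureReal_biUnion_finset_le _ _
    _ ≤ ∑ _v : Fin j → Fin M, (j + 2) * Real.exp (-(j : ℝ) ^ 2) := by
      refine Finset.sum_le_sum fun v _ => (measureReal_union_le _ _).trans ?_
      have h1 : μ.real (⋃ i ∈ Finset.range (j + 1), hi v i) ≤
          (j + 1) * Real.exp (-(j : ℝ) ^ 2) := by
        refine (measureReal_biUnion_finset_le _ _).trans
          ((Finset.sum_le_sum (hhi_le v)).trans_eq ?_)
        rw [Finset.sum_const, Finset.card_range, nsmul_eq_mul]
        push_cast
        ring
      linarith [hlo_le v]
    _ = _ := by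
      rw [Finset.sum_const, Finset.card_univ, Fintype.card_pi_const, Fintype.card_fin,
        nsmul_eq_mul, Nat.cast_pow]

/-- On the good event the counts satisfy the decay required of the redistributing measure. -/
lemma good_decay {M i₀ j : ℕ} (K P τ : ℝ) (hij : i₀ < j) (hM : 0 < M) (hP : 0 < P)
    (hτ0 : 0 < τ) (hτ1 : τ < 1)
    (hMτ : 1 ≤ M * τ) (hK0 : 0 ≤ K)
    (hK : 8 * (j : ℝ) ^ 2 ≤ K * ((M : ℝ) ^ (j - i₀) * P ^ j) * τ ^ j)
    (hbig : 8 * (M : ℝ) ^ i₀ ≤ (M * τ) ^ j)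
    (cnt : ℕ → ℝ) (hlo : K * ((M : ℝ) ^ (j - i₀) * P ^ j) / 2 < cnt i₀)
    (hhi : ∀ i ≤ j, cnt i < 2 * (K * ((M : ℝ) ^ (j - i) * P ^ j)) + (j : ℝ) ^ 2) :
    0 < cnt i₀ ∧ (∀ i, i₀ ≤ i → i ≤ j → cnt i ≤ 5 * τ ^ (i - i₀) * cnt i₀) ∧
      cnt j ≤ τ ^ j * cnt i₀ := by
  have hMr : (0 : ℝ) < M := Nat.cast_pos.2 hM
  set Q := K * ((M : ℝ) ^ (j - i₀) * P ^ j) with hQ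
  have hQ0 : 0 ≤ Q := by positivity
  have hc0 : 0 < cnt i₀ := by linarith
  -- the additive error is negligible
  have herr : (j : ℝ) ^ 2 ≤ 1 / 4 * τ ^ j * cnt i₀ := by
    have : Q / 2 * τ ^ j ≤ cnt i₀ * τ ^ j := by gcongr
    linarith
  have hmain : ∀ i, i₀ ≤ i → i ≤ j →
      2 * (K * ((M : ℝ) ^ (j - i) * P ^ j)) ≤ 4 * ((M : ℝ) ^ (i - i₀))⁻¹ * cnt i₀ := by
    intro i h1 h2
    have h3 : (M : ℝ) ^ (j - i₀) = (M : ℝ) ^ (j - i) * (M : ℝ) ^ (i - i₀) := by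
      rw [← pow_add]; congr 1; omega
    have h4 : K * ((M : ℝ) ^ (j - i) * P ^ j) = Q * ((M : ℝ) ^ (i - i₀))⁻¹ := by
      rw [hQ, h3]; field_simp
    rw [h4]
    have : Q * ((M : ℝ) ^ (i - i₀))⁻¹ ≤ 2 * cnt i₀ * ((M : ℝ) ^ (i - i₀))⁻¹ := by
      gcongr; linarith
    linarith
  refine ⟨hc0, fun i h1 h2 => ?_, ?_⟩
  · have h3 : ((M : ℝ) ^ (i - i₀))⁻¹ ≤ τ ^ (i - i₀) := by
      rw [inv_le_iff_one_le_mul₀' (by positivity), ← mul_pow]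
      exact one_le_pow₀ hMτ
    have h4 : τ ^ j ≤ τ ^ (i - i₀) := pow_le_pow_of_le_one hτ0.le hτ1.le (by omega)
    have h5 := hmain i h1 h2
    have h6 := hhi i h2
    have h7 : 4 * ((M : ℝ) ^ (i - i₀))⁻¹ * cnt i₀ ≤ 4 * τ ^ (i - i₀) * cnt i₀ := by gcongr
    have h8 : 1 / 4 * τ ^ j * cnt i₀ ≤ 1 / 4 * τ ^ (i - i₀) * cnt i₀ := by gcongr
    have h9 : 0 ≤ τ ^ (i - i₀) * cnt i₀ := by positivity
    linarith
  · have h5 := hmain j hij.le le_rfl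
    have h6 := hhi j le_rfl
    have h3 : 4 * ((M : ℝ) ^ (j - i₀))⁻¹ ≤ 1 / 2 * τ ^ j := by
      have h7 : (M : ℝ) ^ j = (M : ℝ) ^ (j - i₀) * (M : ℝ) ^ i₀ := by
        rw [← pow_add]; congr 1; omega
      rw [mul_pow, h7] at hbig
      have h8 : 8 ≤ (M : ℝ) ^ (j - i₀) * τ ^ j := by
        have : 8 * (M : ℝ) ^ i₀ ≤ ((M : ℝ) ^ (j - i₀) * τ ^ j) * (M : ℝ) ^ i₀ := by linarith
        exact le_of_mul_le_mul_right this (by positivity)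
      rw [mul_inv_le_iff₀ (by positivity)]
      linarith
    have h9 : 4 * ((M : ℝ) ^ (j - i₀))⁻¹ * cnt i₀ ≤ 1 / 2 * τ ^ j * cnt i₀ := by gcongr
    have h10 : 0 ≤ τ ^ j * cnt i₀ := by positivity
    linarith

/-- The real `sSup` in `liminf` takes the junk value `0` on unbounded sets; the value `1 / α` is
positive, so this case does not occur. -/
lemma frequently_of_liminf (α : ℝ) (hα : 0 < α) (ℓ : ℕ → ℕ)
    (hℓ : Filter.liminf (fun n : ℕ => (ℓ n : ℝ) / Real.log n) Filter.atTop = 1 / α)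
    (c : ℝ) (hc : 1 / α < c) : ∃ᶠ n : ℕ in atTop, (ℓ n : ℝ) ≤ c * Real.log n := by
  have h1 : ∃ᶠ n : ℕ in atTop, (ℓ n : ℝ) / Real.log n < c := by
    intro hcon
    simp only [not_lt] at hcon
    rw [Filter.liminf_eq] at hℓ
    by_cases hb : BddAbove {a : ℝ | ∀ᶠ n : ℕ in atTop, a ≤ (ℓ n : ℝ) / Real.log n}
    · have := le_csSup hb hcon
      linarith
    · rw [Real.sSup_of_not_bddAbove hb] at hℓ
      have : 0 < 1 / α := by positivity
      linarith
  refine (h1.and_eventually (eventually_gt_atTop 1)).mono fun n ⟨h2, h3⟩ => ?_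
  have : 0 < Real.log n := Real.log_pos (by exact_mod_cast h3)
  rw [div_lt_iff₀ this] at h2
  exact h2.le

/-- The conditions on the generation `j` that hold for all large `j`: the bound on `(M * τ) ^ j` makes the block
system beat the accumulated constants, the next one leaves room for discarding the first `n₀` blocks,
the last makes the expected counts dominate the additive error `j ^ 2`. -/
lemma eventually_scale (b M i₀ n₀ : ℕ) (hb : 0 < b) (κ c τ : ℝ) (hκ : 0 < κ) (hc : 0 < c)
    (hMτ : 1 < M * τ) :
    ∀ᶠ j : ℕ in atTop, i₀ < j ∧ 8 * (M : ℝ) ^ i₀ ≤ (M * τ) ^ j ∧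
      2 * (b * j) * (n₀ + 1) ≤ Real.exp ((b * j - b) / c) ∧
      16 * b * M ^ i₀ * (j : ℝ) ^ 3 * Real.exp (b / c) ≤ Real.exp (κ / 2 * b * j) := by
  have hbr : (0 : ℝ) < b := Nat.cast_pos.2 hb
  have hexp : ∀ (k : ℕ) (C a : ℝ), 0 < a → ∀ᶠ j : ℕ in atTop, C * (j : ℝ) ^ k ≤ Real.exp (a * j) := by
    intro k C a ha
    have h1 := ((isLittleO_pow_exp_pos_mul_atTop k ha).def
      (show (0 : ℝ) < (|C| + 1)⁻¹ by positivity))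
    refine (tendsto_natCast_atTop_atTop.eventually h1).mono fun j hj => ?_
    rw [Real.norm_of_nonneg (by positivity), Real.norm_of_nonneg (Real.exp_pos _).le,
      le_inv_mul_iff₀ (by positivity)] at hj
    refine le_trans ?_ hj
    gcongr
    linarith [le_abs_self C]
  have e1 : ∀ᶠ j : ℕ in atTop, 8 * (M : ℝ) ^ i₀ ≤ (M * τ) ^ j :=
    (tendsto_pow_atTop_atTop_of_one_lt hMτ).eventually_ge_atTop _
  have e2 := hexp 1 (2 * b * (n₀ + 1) * Real.exp (b / c)) (b / c) (by positivity)
  have e3 := hexp 3 (16 * b * M ^ i₀ * Real.exp (b / c)) (κ / 2 * b) (by positivity)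
  filter_upwards [eventually_gt_atTop i₀, e1, e2, e3] with j h0 h1 h2 h3
  refine ⟨h0, h1, ?_, by linarith⟩
  rw [sub_div, Real.exp_sub, le_div_iff₀ (Real.exp_pos _),
    show (b * j / c : ℝ) = b / c * j by ring]
  linarith

/-- The probability of the bad event of `measure_bad_le` tends to zero. -/
lemma tendsto_bad (M : ℕ) :
    Tendsto (fun j : ℕ => (M : ℝ) ^ j * ((j + 2) * Real.exp (-(j : ℝ) ^ 2))) atTop (𝓝 0) := by
  have hlim : Tendsto (fun j : ℕ => Real.exp (-(j : ℝ))) atTop (𝓝 0) :=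
    Real.tendsto_exp_neg_atTop_nhds_zero.comp tendsto_natCast_atTop_atTop
  refine squeeze_zero' (Eventually.of_forall fun j => by positivity) ?_ hlim
  filter_upwards [eventually_ge_atTop (M + 3)] with j hj
  have hj' : (M : ℝ) + 3 ≤ j := by exact_mod_cast hj
  have h1 : (M : ℝ) ^ j ≤ Real.exp (M * j) := by
    rw [mul_comm, Real.exp_nat_mul]
    gcongr
    linarith [Real.add_one_le_exp (M : ℝ)]
  have h2 : (j : ℝ) + 2 ≤ Real.exp (j + 1) := by linarith [Real.add_one_le_exp ((j : ℝ) + 1)]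
  calc (M : ℝ) ^ j * ((j + 2) * Real.exp (-(j : ℝ) ^ 2))
      ≤ Real.exp (M * j) * (Real.exp (j + 1) * Real.exp (-(j : ℝ) ^ 2)) := by gcongr
    _ = Real.exp (M * j + (j + 1 + -(j : ℝ) ^ 2)) := by
      rw [← Real.exp_add, ← Real.exp_add]
    _ ≤ Real.exp (-(j : ℝ)) := by
      refine Real.exp_le_exp.2 ?_
      have hM0 : (0 : ℝ) ≤ M := Nat.cast_nonneg M
      nlinarith

/-- For almost every `o`, arbitrarily far along `o` the blocks composed of the words `g a` are so
well distributed that their empirical measure can be used for redistribution. -/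
lemma ae_exists_empirical {N M b : ℕ} [NeZero M] (hb : 0 < b) {g : Fin M → Fin b → Fin N}
    (hg : Function.Injective g) (p : Fin N → ℝ) (hp : ∀ i, 0 < p i)
    (hpsum : ∑ i, p i = 1) (μ : Measure (ℕ → Fin N)) [IsProbabilityMeasure μ]
    (hμ : ∀ (m : ℕ) (w : Fin m → Fin N), μ (_root_.cylinder w) = ENNReal.ofReal (wordProd p w))
    (P : ℝ) (hP0 : 0 < P) (hP : ∀ a, wordProd p (g a) = P)
    (α : ℝ) (hα : 0 < α) (ℓ : ℕ → ℕ) (hℓmono : Monotone ℓ)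
    (hℓ : Filter.liminf (fun n : ℕ => (ℓ n : ℝ) / Real.log n) Filter.atTop = 1 / α)
    (τ κ : ℝ) (hτ0 : 0 < τ) (hτ1 : τ < 1) (hκ : 0 < κ) (hMτ : 1 < M * τ)
    (hgrow : Real.exp ((κ - α) * b) ≤ M * τ * P) (i₀ n₀ : ℕ) :
    ∀ᵐ o ∂μ, ∃ j > i₀, ∃ θ : Measure (ℕ → Fin M), IsFiniteMeasure θ ∧
      θ {x | PiNat.cylinder x j ⊆ blockMap hb g ⁻¹'
        ⋃ m, ⋃ _ : n₀ ≤ m, _root_.cylinder (fun c : Fin (ℓ m) => o (m + (c : ℕ)))}ᶜ = 0 ∧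
      (∀ x, θ (PiNat.cylinder x i₀) ≠ 0) ∧
      (∀ x i, i₀ ≤ i → i ≤ j → θ (PiNat.cylinder x i) ≤
        5 * ENNReal.ofReal τ ^ (i - i₀) * θ (PiNat.cylinder x i₀)) ∧
      ∀ x, θ (PiNat.cylinder x j) ≤ ENNReal.ofReal τ ^ j * θ (PiNat.cylinder x i₀) := by
  have hM0 : 0 < M := Nat.pos_of_ne_zero (NeZero.ne M)
  have hMr : (0 : ℝ) < M := Nat.cast_pos.2 hM0
  have hbr : (0 : ℝ) < b := Nat.cast_pos.2 hb
  -- an exponent slightly below `α`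
  obtain ⟨a, ha0, haα, haκ⟩ : ∃ a, 0 < a ∧ a < α ∧ α - κ / 2 ≤ a :=
    ⟨max (α / 2) (α - κ / 2), lt_max_of_lt_left (by positivity),
      max_lt (by linarith) (by linarith), le_max_right _ _⟩
  set c : ℝ := 1 / a with hc
  have hc0 : 0 < c := by positivity
  have hfreq := frequently_of_liminf α hα ℓ hℓ c (one_div_lt_one_div_of_lt ha0 haα)
  -- a generation `j` with `ℓ n ≤ b * j`, of order `log n`
  set J : ℕ → ℕ := fun n => ⌊c * Real.log n / b⌋₊ + 1 with hJ
  have hJlim : Tendsto J atTop atTop := by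
    refine (tendsto_add_atTop_nat 1).comp (tendsto_nat_floor_atTop.comp ?_)
    exact Tendsto.atTop_div_const hbr (Tendsto.const_mul_atTop hc0
      (Real.tendsto_log_atTop.comp tendsto_natCast_atTop_atTop))
  rw [ae_iff]
  -- the exceptional set is contained in bad events of arbitrarily small probability
  refine (measureReal_eq_zero_iff (measure_ne_top _ _)).1 (le_antisymm ?_ measureReal_nonneg)
  refine le_of_forall_pos_le_add fun ε hε => ?_
  rw [zero_add]
  obtain ⟨n, hn, hn1, hsc, hεj⟩ := (hfreq.and_eventually ((eventually_ge_atTop 1).and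
    ((hJlim.eventually (eventually_scale b M i₀ n₀ hb κ c τ hκ hc0 hMτ)).and
    (hJlim.eventually ((tendsto_bad M).eventually_lt_const hε))))).exists
  set j := J n with hj
  obtain ⟨hij, hbig, hn₀, hcube⟩ := hsc
  have hj0 : 0 < j := by omega
  have hjr : (0 : ℝ) < j := Nat.cast_pos.2 hj0
  have hnr : (0 : ℝ) < n := Nat.cast_pos.2 hn1
  have hlog0 : 0 ≤ Real.log n := Real.log_nonneg (by exact_mod_cast hn1)
  have hℓn : ℓ n ≤ b * j := by
    have h1 : c * Real.log n / b ≤ j := by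
      rw [hj, hJ]; push_cast; exact (Nat.lt_floor_add_one _).le
    rw [div_le_iff₀ hbr] at h1
    have : (ℓ n : ℝ) ≤ ((b * j : ℕ) : ℝ) := by push_cast; linarith
    exact_mod_cast this
  have hnexp : Real.exp ((b * j - b) / c) ≤ n := by
    rw [← Real.le_log_iff_exp_le hnr, div_le_iff₀ hc0]
    have h1 : (j : ℝ) - 1 ≤ c * Real.log n / b := by
      rw [hj, hJ]; push_cast
      simpa using Nat.floor_le (show 0 ≤ c * Real.log n / b by positivity)
    rw [le_div_iff₀ hbr] at h1
    linarith
  set R : Finset ℕ := Finset.Ico n₀ (n / (b * j)) with hR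
  have hbj : 0 < b * j := Nat.mul_pos hb hj0
  have hRsub : ∀ r ∈ R, n₀ ≤ r * (b * j) ∧ ℓ (r * (b * j)) ≤ b * j := by
    intro r hr
    obtain ⟨h1, h2⟩ := Finset.mem_Ico.1 hr
    refine ⟨h1.trans (Nat.le_mul_of_pos_right _ hbj), (hℓmono ?_).trans hℓn⟩
    exact (Nat.mul_le_mul_right _ h2.le).trans (Nat.div_mul_le_self _ _)
  have hcard : (n : ℝ) / (2 * (b * j)) ≤ R.card := by
    have h1 : n / (b * j) ≤ R.card + n₀ := by rw [hR, Nat.card_Ico]; omega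
    have h2 : (n : ℝ) / (b * j) - 1 ≤ ((n / (b * j) : ℕ) : ℝ) := by
      have := (Nat.sub_one_lt_floor ((n : ℝ) / ((b * j : ℕ) : ℝ))).le
      rw [Nat.floor_div_eq_div] at this
      push_cast at this ⊢
      exact this
    have h3 : ((n / (b * j) : ℕ) : ℝ) ≤ R.card + n₀ := by exact_mod_cast h1
    have h4 : (n₀ : ℝ) + 1 ≤ n / (2 * (b * j)) := by
      rw [le_div_iff₀ (by positivity)]
      linarith
    have h5 : (n : ℝ) / (b * j) = 2 * (n / (2 * (b * j))) := by field_simp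
    linarith
  have hKτ : 8 * (j : ℝ) ^ 2 ≤ R.card * ((M : ℝ) ^ (j - i₀) * P ^ j) * τ ^ j := by
    have h1 : (M : ℝ) ^ j = (M : ℝ) ^ (j - i₀) * (M : ℝ) ^ i₀ := by
      rw [← pow_add]; congr 1; omega
    have h2 : Real.exp ((κ - α) * b * j) ≤ (M * τ * P) ^ j := by
      rw [mul_comm _ (j : ℝ), Real.exp_nat_mul]
      gcongr
    have h3 : Real.exp (κ / 2 * b * j) ≤ Real.exp (b / c) * (n * (M * τ * P) ^ j) := by
      calc Real.exp (κ / 2 * b * j)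
          ≤ Real.exp (b / c + ((b * j - b) / c + (κ - α) * b * j)) := by
            refine Real.exp_le_exp.2 ?_
            have h4 : (b : ℝ) / c + ((b * j - b) / c + (κ - α) * b * j) =
                (a + κ - α) * (b * j) := by
              rw [hc]; field_simp; ring
            rw [h4, mul_assoc]
            exact mul_le_mul_of_nonneg_right (by linarith) (by positivity)
        _ = Real.exp (b / c) * (Real.exp ((b * j - b) / c) * Real.exp ((κ - α) * b * j)) := by
            rw [← Real.exp_add, ← Real.exp_add]
        _ ≤ _ := by gcongr
    have h4 : 16 * b * (M : ℝ) ^ i₀ * (j : ℝ) ^ 3 ≤ n * (M * τ * P) ^ j := by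
      refine le_of_mul_le_mul_left ?_ (Real.exp_pos (b / c))
      linarith
    have h5 : (n : ℝ) ≤ R.card * (2 * (b * j)) := by
      rwa [div_le_iff₀ (by positivity)] at hcard
    have h6 : 16 * b * (M : ℝ) ^ i₀ * (j : ℝ) ^ 3 ≤
        R.card * (2 * (b * j)) * (M * τ * P) ^ j := h4.trans (by gcongr)
    have h7 : (2 * b * j * (M : ℝ) ^ i₀) * (8 * (j : ℝ) ^ 2) ≤ (2 * b * j * (M : ℝ) ^ i₀) *
        (R.card * ((M : ℝ) ^ (j - i₀) * P ^ j) * τ ^ j) := by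
      rw [mul_pow, mul_pow, h1] at h6
      linarith
    exact le_of_mul_le_mul_left h7 (by positivity)
  have hK : 8 * (j : ℝ) ^ 2 ≤ R.card * ((M : ℝ) ^ (j - i₀) * P ^ j) :=
    hKτ.trans (mul_le_of_le_one_right (by positivity) (pow_le_one₀ hτ0.le hτ1.le))
  refine le_trans (measureReal_mono ?_ (measure_ne_top _ _))
    ((measure_bad_le hb hg p hp hpsum μ hμ P hP i₀ j hj0 hij.le R hK).trans hεj.le)
  intro o ho hgood
  refine ho ⟨j, hij, empirical hb g j R o, inferInstance,
    empirical_support hb g j R o ℓ n₀ hRsub, ?_⟩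
  have hdecay := fun x : ℕ → Fin M => good_decay (R.card : ℝ) P τ hij hM0 hP0 hτ0 hτ1 hMτ.le
    (Nat.cast_nonneg _) hKτ hbig (fun i => blockCount R (prefixBlocks hb g j x i) o)
    (hgood x).1 (hgood x).2
  have hcyl := empirical_cylinder hb hg j R o
  refine ⟨fun x => ?_, fun x i h1 h2 => ?_, fun x => ?_⟩
  · rw [hcyl x i₀ hij.le]
    simpa using (hdecay x).1
  · rw [hcyl x i₀ hij.le, hcyl x i h2, ← ENNReal.ofReal_pow hτ0.le,
      show (5 : ℝ≥0∞) = ENNReal.ofReal 5 by norm_num, ← ENNReal.ofReal_mul (by norm_num),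
      ← ENNReal.ofReal_mul (by positivity)]
    exact ENNReal.ofReal_le_ofReal ((hdecay x).2.1 i h1 h2)
  · rw [hcyl x i₀ hij.le, hcyl x j le_rfl, ← ENNReal.ofReal_pow hτ0.le,
      ← ENNReal.ofReal_mul (by positivity)]
    exact ENNReal.ofReal_le_ofReal (hdecay x).2.2

/-! ### The lower bound -/

/-- The almost sure lower bound for a fixed `t < s(α)`. -/
lemma ae_le_dimH {N d : ℕ} [NeZero N] (lam p : Fin N → ℝ)
    (hlam : ∀ i, lam i ∈ Set.Ioo (0 : ℝ) 1)
    (hp : ∀ i, 0 < p i) (hpsum : ∑ i, p i = 1)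
    (f : Fin N → EuclideanSpace ℝ (Fin d) → EuclideanSpace ℝ (Fin d))
    (hf : ∀ i x y, dist (f i x) (f i y) = lam i * dist x y)
    (U : Set (EuclideanSpace ℝ (Fin d)))
    (hUne : U.Nonempty) (hUo : IsOpen U)
    (hUsub : ∀ i, f i '' U ⊆ U)
    (hUdisj : Pairwise fun i j => Disjoint (f i '' U) (f j '' U))
    (π : (ℕ → Fin N) → EuclideanSpace ℝ (Fin d))
    (hπ : ∀ x, Filter.Tendsto (fun n => prefixMap f x n 0) Filter.atTop (nhds (π x)))
    (μ : Measure (ℕ → Fin N)) [IsProbabilityMeasure μ]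
    (hμ : ∀ (m : ℕ) (w : Fin m → Fin N), μ (_root_.cylinder w) = ENNReal.ofReal (wordProd p w))
    (α : ℝ) (hα : 0 < α)
    (ℓ : ℕ → ℕ) (hℓmono : Monotone ℓ)
    (hℓ : Filter.liminf (fun n : ℕ => (ℓ n : ℝ) / Real.log n) Filter.atTop = 1 / α)
    (sα : ℝ) (hsα : ∑ i, lam i ^ sα * (p i * Real.exp α) = 1)
    (hαcond : α ≤ -∑ i, lam i ^ sα * (p i * Real.exp α) * Real.log (p i))
    (t : ℝ) (ht0 : 0 < t) (ht : t < sα) :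
    ∀ᵐ o ∂μ, ENNReal.ofReal t ≤ dimH (π '' limsupCylinders ℓ o) := by
  obtain ⟨b, G, ρ, P, κ, t', hb, hGne, hρ0, hρ1, hP0, hκ, htt', hG, hGt', hgrow⟩ :=
    exists_block lam p hlam hp α sα t ht hsα hαcond
  have : NeZero G.card := ⟨Finset.card_ne_zero.2 hGne⟩
  -- an enumeration of the words in `G`
  set g : Fin G.card → Fin b → Fin N := fun a => (G.equivFin.symm a : Fin b → Fin N) with hg
  have hginj : Function.Injective g := fun a a' h => G.equivFin.symm.injective (Subtype.ext h)
  have hgl : ∀ a, wordProd lam (g a) = ρ := fun a => (hG _ (G.equivFin.symm a).2).1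
  have hgp : ∀ a, wordProd p (g a) = P := fun a => (hG _ (G.equivFin.symm a).2).2
  have hτ0 : 0 < ρ ^ t := Real.rpow_pos_of_pos hρ0 t
  have hτ1 : ρ ^ t < 1 := Real.rpow_lt_one hρ0.le hρ1 ht0
  have hMτ : 1 < G.card * ρ ^ t := hGt'.trans_lt (mul_lt_mul_of_pos_left
    (Real.rpow_lt_rpow_of_exponent_gt hρ0 hρ1 htt') (Nat.cast_pos.2 hGne.card_pos))
  have hae := ae_all_iff.2 fun i₀ => ae_all_iff.2 fun n₀ =>
    ae_exists_empirical hb hginj p hp hpsum μ hμ P hP0 hgp α hα ℓ hℓmono hℓ (ρ ^ t) κ hτ0 hτ1 hκ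
      hMτ hgrow i₀ n₀
  filter_upwards [hae] with o ho
  obtain ⟨m, hm, hmT, hmdecay⟩ := exists_frostman (ENNReal.ofReal (ρ ^ t))
    (fun n₀ => blockMap hb g ⁻¹'
      ⋃ m, ⋃ _ : n₀ ≤ m, _root_.cylinder (fun c : Fin (ℓ m) => o (m + (c : ℕ)))) ho
  refine (le_dimH_of_frostman hlam hf hUne hUo hUsub hUdisj hπ ρ t hρ0 hρ1 ht0 (blockMap hb g)
    (blockMap_prod hb g lam ρ hgl) (exists_blockMap_ne hb hginj) m hmdecay
    (blockMap hb g ⁻¹' limsupCylinders ℓ o) ?_).trans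
    (dimH_mono (Set.image_mono (Set.image_preimage_subset _ _)))
  rw [limsupCylinders, Set.preimage_iInter, Set.compl_iInter]
  exact measure_iUnion_null hmT

/-- Lower bound in the small-`α` region: if `α ≤ −Σ λ_i^(s(α)) p_i e^α log p_i`
where `s(α) = P_α(1)`, then a.s. `dim_H R(ō,ℓ) ≥ s(α)`. -/
theorem dimH_coverSet_ge {N d : ℕ} [NeZero N] (hN : 2 ≤ N)
    (lam p : Fin N → ℝ)
    (hlam : ∀ i, lam i ∈ Set.Ioo (0 : ℝ) 1)
    (hp : ∀ i, 0 < p i) (hpsum : ∑ i, p i = 1)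
    (f : Fin N → EuclideanSpace ℝ (Fin d) → EuclideanSpace ℝ (Fin d))
    (hf : ∀ i x y, dist (f i x) (f i y) = lam i * dist x y)
    (Λ : Set (EuclideanSpace ℝ (Fin d)))
    (hΛne : Λ.Nonempty) (hΛc : IsCompact Λ) (hΛ : Λ = ⋃ i, f i '' Λ)
    (U : Set (EuclideanSpace ℝ (Fin d)))
    (hUne : U.Nonempty) (hUo : IsOpen U) (hUb : Bornology.IsBounded U)
    (hUsub : ∀ i, f i '' U ⊆ U)
    (hUdisj : Pairwise fun i j => Disjoint (f i '' U) (f j '' U))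
    (π : (ℕ → Fin N) → EuclideanSpace ℝ (Fin d))
    (hπ : ∀ x, Filter.Tendsto (fun n => prefixMap f x n 0) Filter.atTop (nhds (π x)))
    (μ : Measure (ℕ → Fin N)) [IsProbabilityMeasure μ]
    (hμ : ∀ (m : ℕ) (w : Fin m → Fin N), μ (cylinder w) = ENNReal.ofReal (wordProd p w))
    (α : ℝ) (hα : 0 < α)
    (ℓ : ℕ → ℕ) (hℓmono : Monotone ℓ)
    (hℓ : Filter.liminf (fun n : ℕ => (ℓ n : ℝ) / Real.log n) Filter.atTop = 1 / α)
    (sα : ℝ) (hsα : ∑ i, lam i ^ sα * (p i * Real.exp α) = 1)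
    (hαcond : α ≤ -∑ i, lam i ^ sα * (p i * Real.exp α) * Real.log (p i)) :
    ∀ᵐ o ∂μ, ENNReal.ofReal sα ≤ dimH (π '' limsupCylinders ℓ o) := by
  rcases le_or_gt sα 0 with hs0 | hs0
  · rw [ENNReal.ofReal_of_nonpos hs0]
    exact Eventually.of_forall fun _ => zero_le
  · obtain ⟨t, -, htmem, htlim⟩ := exists_seq_strictMono_tendsto' hs0
    have hae := ae_all_iff.2 fun n => ae_le_dimH lam p hlam hp hpsum f hf U hUne hUo hUsub hUdisj
      π hπ μ hμ α hα ℓ hℓmono hℓ sα hsα hαcond (t n) (htmem n).1 (htmem n).2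
    filter_upwards [hae] with o ho
    exact le_of_tendsto' (ENNReal.tendsto_ofReal htlim) ho
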